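/- arXiv:1110.3265 — 3 statements merged into one kernel-verified Lean document; each statement's English description precedes it below -/
import Mathlib

section
/- Let X = (X_1,…,X_k) follow the multinomial distribution M_k(n,π) with n ≥ 1 and dispersion matrix Σ, and let g : ℕ^k → ℝ. Then Var g(X) = E[ w(X) · ∇g(X)ᵀ Σ ∇g(X) ] holds with equality if and only if there exist real numbers ρ_0, ρ_1, …, ρ_k such that g(x) = ρ_0 + Σ_{i=1}^k ρ_i x_i for all x in the support of X. -/
/-!
A multinomial vector is a sum of `n` independent steps, each equal to `e_i` with probability `π_i`
and to `0` with probability `π_0`. Writing `A g (x) = E g (x + step)`, expectations satisfy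
`E_{n+1} g = E_n (A g)` (`mExp_succ`), while the `w`-function removes one step:
`p_{n+1} w = p_n` (`multPMF_mul_multW`). Since `∇gᵀ Σ ∇g` is `n` times the one-step conditional
variance `q g = A (g²) - (A g)²`, the right-hand side of the bound is `n E_{n-1} (q g)`, so the bound
is the Efron-Stein inequality. The difference of its two sides, `gap`, satisfies

  `gap (m + 1) g = (m + 1) E_m (H g) + gap m (A g)`,  `gap 0 g = 0`,

where `H g (x)` is the second moment of the interaction part in the Hoeffding decomposition of
`(c, d) ↦ g (x + e_c + e_d)` (`gap_succ`). Hence `gap ≥ 0`, and if `gap` vanishes then so do all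
interactions, i.e. `Δ_i Δ_j g (x) = 0` whenever `x + e_i + e_j` is in the support, which makes `g`
affine there (`affine_of_second_difference`). Conversely, for affine `g` all interactions vanish and
`A g` is again affine, so `gap = 0` by induction.
-/


open scoped BigOperators

/-- The p.m.f. of the multinomial distribution `M_k(n, π)` on `ℕ^k`. -/
noncomputable def multPMF (k n : ℕ) (π : Fin k → ℝ) (x : Fin k → ℕ) : ℝ :=
  if ∑ i, x i ≤ n then
    (Nat.factorial n : ℝ) /
        ((∏ i, (Nat.factorial (x i) : ℝ)) * (Nat.factorial (n - ∑ i, x i) : ℝ)) *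
      (∏ i, π i ^ x i) * (1 - ∑ i, π i) ^ (n - ∑ i, x i)
  else 0

/-- The multinomial `w`-function. -/
noncomputable def multW (k n : ℕ) (π : Fin k → ℝ) (x : Fin k → ℕ) : ℝ :=
  if n = 0 then 0 else ((n : ℝ) - ∑ i, (x i : ℝ)) / ((n : ℝ) * (1 - ∑ i, π i))

/-- The dispersion (covariance) matrix of the multinomial distribution. -/
noncomputable def multSigma (k n : ℕ) (π : Fin k → ℝ) (i j : Fin k) : ℝ :=
  if i = j then (n : ℝ) * π i * (1 - π i) else -((n : ℝ) * π i * π j)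

/-- Forward difference `Δ_i g (x) = g (x + e_i) - g x`. -/
def fd {k : ℕ} (g : (Fin k → ℕ) → ℝ) (i : Fin k) (x : Fin k → ℕ) : ℝ :=
  g (Function.update x i (x i + 1)) - g x

/-- Quadratic form `vᵀ S v`. -/
def quadForm {k : ℕ} (S : Fin k → Fin k → ℝ) (v : Fin k → ℝ) : ℝ :=
  ∑ i, ∑ j, v i * S i j * v j

/-- Total mass `x_1 + ⋯ + x_k` is raised by one when a unit vector is added. -/
lemma sum_add_single {k : ℕ} (x : Fin k → ℕ) (i : Fin k) :
    ∑ j, (x + Pi.single i 1 : Fin k → ℕ) j = ∑ j, x j + 1 := by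
  simp [Finset.sum_add_distrib]

lemma induction_add_single {k : ℕ} {P : (Fin k → ℕ) → Prop} (h0 : P 0)
    (hs : ∀ x i, P x → P (x + Pi.single i 1)) (x : Fin k → ℕ) : P x := by
  induction hn : ∑ j, x j generalizing x with
  | zero =>
    have : x = 0 := by
      ext j
      simpa using (Finset.sum_eq_zero_iff.mp hn) j (Finset.mem_univ j)
    rwa [this]
  | succ m ih =>
    obtain ⟨i, hi⟩ : ∃ i, x i ≠ 0 := by
      by_contra! h
      simp [h] at hn
    have hx : x = (x - Pi.single i 1) + Pi.single i 1 := by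
      ext j
      by_cases hj : j = i
      · subst hj; simp; omega
      · simp [hj]
    have h1 := sum_add_single (x - Pi.single i 1) i
    rw [← hx] at h1
    rw [hx]
    exact hs _ _ (ih _ (by omega))

/-! ### The probability mass function -/

lemma multPMF_pos {k n : ℕ} {π : Fin k → ℝ} (hπ : ∀ i, 0 < π i) (hπ0 : 0 < 1 - ∑ i, π i)
    {x : Fin k → ℕ} (hx : ∑ i, x i ≤ n) : 0 < multPMF k n π x := by
  rw [multPMF, if_pos hx]
  have h1 : 0 < ∏ i, (Nat.factorial (x i) : ℝ) :=
    Finset.prod_pos fun i _ => by exact_mod_cast Nat.factorial_pos _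
  have h2 : 0 < ∏ i, π i ^ x i := Finset.prod_pos fun i _ => pow_pos (hπ i) _
  positivity

lemma multPMF_eq_zero {k n : ℕ} {π : Fin k → ℝ} {x : Fin k → ℕ} (hx : ¬ ∑ i, x i ≤ n) :
    multPMF k n π x = 0 := by
  rw [multPMF, if_neg hx]

lemma multPMF_nonneg {k n : ℕ} {π : Fin k → ℝ} (hπ : ∀ i, 0 < π i) (hπ0 : 0 < 1 - ∑ i, π i)
    (x : Fin k → ℕ) : 0 ≤ multPMF k n π x := by
  by_cases hx : ∑ i, x i ≤ n
  · exact (multPMF_pos hπ hπ0 hx).le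
  · exact (multPMF_eq_zero hx).ge

/-- Removing a step that stays put. -/
lemma multPMF_succ_none {k : ℕ} (n : ℕ) (π : Fin k → ℝ) (x : Fin k → ℕ) :
    ((n : ℝ) + 1 - ∑ i, (x i : ℝ)) * multPMF k (n + 1) π x
      = (n + 1) * ((1 - ∑ i, π i) * multPMF k n π x) := by
  rw [← Nat.cast_sum]
  by_cases hx : ∑ i, x i ≤ n
  · obtain ⟨r, hr⟩ := Nat.exists_eq_add_of_le hx
    rw [multPMF, multPMF, if_pos hx, if_pos (by omega)]
    have e1 : n + 1 - ∑ i, x i = r + 1 := by omega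
    have e2 : n - ∑ i, x i = r := by omega
    have e3 : ((n : ℝ) + 1 - ((∑ i, x i : ℕ) : ℝ)) = r + 1 := by
      rw [hr]; push_cast; ring
    have h1 : (∏ i, (Nat.factorial (x i) : ℝ)) ≠ 0 :=
      Finset.prod_ne_zero_iff.mpr fun i _ => by exact_mod_cast Nat.factorial_ne_zero _
    have h2 : (Nat.factorial r : ℝ) ≠ 0 := by exact_mod_cast Nat.factorial_ne_zero _
    have h3 : (r : ℝ) + 1 ≠ 0 := by positivity
    rw [e1, e2, e3, Nat.factorial_succ r, Nat.factorial_succ n, pow_succ]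
    push_cast
    field_simp
  · rw [multPMF_eq_zero hx]
    by_cases hx' : ∑ i, x i = n + 1
    · rw [hx']; push_cast; ring
    · rw [multPMF_eq_zero (by omega)]; ring

/-- Removing a step in direction `i`. -/
lemma multPMF_succ_some {k : ℕ} (n : ℕ) (π : Fin k → ℝ) (x : Fin k → ℕ) (i : Fin k) :
    ((x i : ℝ) + 1) * multPMF k (n + 1) π (x + Pi.single i 1)
      = (n + 1) * (π i * multPMF k n π x) := by
  by_cases hx : ∑ i, x i ≤ n
  · rw [multPMF, multPMF, sum_add_single, if_pos hx, if_pos (by omega)]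
    have e1 : n + 1 - (∑ i, x i + 1) = n - ∑ i, x i := by omega
    have e2 : ∏ j, (Nat.factorial ((x + Pi.single i 1 : Fin k → ℕ) j) : ℝ)
        = ((x i : ℝ) + 1) * ∏ j, (Nat.factorial (x j) : ℝ) := by
      have : ∀ j, (Nat.factorial ((x + Pi.single i 1 : Fin k → ℕ) j) : ℝ)
          = (if j = i then (x i : ℝ) + 1 else 1) * (Nat.factorial (x j) : ℝ) := by
        intro j
        by_cases hj : j = i
        · subst hj; simp [Nat.factorial_succ]
        · simp [hj]
      simp_rw [this]
      rw [Finset.prod_mul_distrib, Finset.prod_ite_eq' Finset.univ i]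
      simp
    have e3 : ∏ j, π j ^ (x + Pi.single i 1 : Fin k → ℕ) j = π i * ∏ j, π j ^ x j := by
      have : ∀ j, π j ^ (x + Pi.single i 1 : Fin k → ℕ) j = (if j = i then π i else 1) * π j ^ x j := by
        intro j
        by_cases hj : j = i
        · subst hj; simp [pow_succ, mul_comm]
        · simp [hj]
      simp_rw [this]
      rw [Finset.prod_mul_distrib, Finset.prod_ite_eq' Finset.univ i]
      simp
    have h1 : (∏ i, (Nat.factorial (x i) : ℝ)) ≠ 0 :=
      Finset.prod_ne_zero_iff.mpr fun i _ => by exact_mod_cast Nat.factorial_ne_zero _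
    have h2 : (Nat.factorial (n - ∑ i, x i) : ℝ) ≠ 0 := by
      exact_mod_cast Nat.factorial_ne_zero _
    have h3 : (x i : ℝ) + 1 ≠ 0 := by positivity
    rw [e1, e2, e3, Nat.factorial_succ n]
    push_cast
    field_simp
  · rw [multPMF_eq_zero hx, multPMF_eq_zero (by rw [sum_add_single]; omega)]; ring

/-- Weighting by the `w`-function lowers the number of trials by one. -/
lemma multPMF_mul_multW {k : ℕ} (n : ℕ) {π : Fin k → ℝ} (hπ0 : 0 < 1 - ∑ i, π i)
    (x : Fin k → ℕ) :
    multPMF k (n + 1) π x * multW k (n + 1) π x = multPMF k n π x := by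
  have h := multPMF_succ_none n π x
  have h1 : (n : ℝ) + 1 ≠ 0 := by positivity
  rw [multW, if_neg (by omega), mul_div_assoc', div_eq_iff (by push_cast; positivity)]
  push_cast
  linarith

/-! ### Expectations -/

/-- Expectation of `f(X)` for `X ∼ M_k(n, π)`. -/
noncomputable def mExp {k : ℕ} (π : Fin k → ℝ) (n : ℕ) (f : (Fin k → ℕ) → ℝ) : ℝ :=
  ∑' x, multPMF k n π x * f x

lemma finite_simplex (k n : ℕ) : {x : Fin k → ℕ | ∑ i, x i ≤ n}.Finite := by
  refine (Set.finite_Iic (fun _ : Fin k => n)).subset fun x hx i => ?_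
  exact (Finset.single_le_sum (fun j _ => Nat.zero_le (x j)) (Finset.mem_univ i)).trans hx

lemma summable_multPMF {k : ℕ} (π : Fin k → ℝ) (n : ℕ) (f : (Fin k → ℕ) → ℝ) :
    Summable fun x => multPMF k n π x * f x := by
  refine summable_of_hasFiniteSupport ((finite_simplex k n).subset fun x hx => ?_)
  by_contra h
  exact hx (by simp [multPMF_eq_zero h])

lemma mExp_add {k : ℕ} (π : Fin k → ℝ) (n : ℕ) (f g : (Fin k → ℕ) → ℝ) :
    mExp π n (fun x => f x + g x) = mExp π n f + mExp π n g := by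
  simp only [mExp, mul_add]
  exact (summable_multPMF π n f).tsum_add (summable_multPMF π n g)

lemma mExp_const_mul {k : ℕ} (π : Fin k → ℝ) (n : ℕ) (a : ℝ) (f : (Fin k → ℕ) → ℝ) :
    mExp π n (fun x => a * f x) = a * mExp π n f := by
  simp only [mExp, mul_left_comm _ a]
  exact tsum_mul_left

lemma mExp_sub {k : ℕ} (π : Fin k → ℝ) (n : ℕ) (f g : (Fin k → ℕ) → ℝ) :
    mExp π n (fun x => f x - g x) = mExp π n f - mExp π n g := by
  simp only [mExp, mul_sub]
  exact (summable_multPMF π n f).tsum_sub (summable_multPMF π n g)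

lemma mExp_sum {k : ℕ} (π : Fin k → ℝ) (n : ℕ) {ι : Type*} (s : Finset ι)
    (f : ι → (Fin k → ℕ) → ℝ) :
    mExp π n (fun x => ∑ i ∈ s, f i x) = ∑ i ∈ s, mExp π n (f i) := by
  simp only [mExp, Finset.mul_sum]
  exact Summable.tsum_finsetSum fun i _ => summable_multPMF π n (f i)

lemma mExp_nonneg {k : ℕ} {π : Fin k → ℝ} (hπ : ∀ i, 0 < π i) (hπ0 : 0 < 1 - ∑ i, π i) (n : ℕ)
    {f : (Fin k → ℕ) → ℝ} (hf : ∀ x, 0 ≤ f x) : 0 ≤ mExp π n f :=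
  tsum_nonneg fun x => mul_nonneg (multPMF_nonneg hπ hπ0 x) (hf x)

lemma mExp_eq_zero_iff {k : ℕ} {π : Fin k → ℝ} (hπ : ∀ i, 0 < π i) (hπ0 : 0 < 1 - ∑ i, π i)
    (n : ℕ) {f : (Fin k → ℕ) → ℝ} (hf : ∀ x, 0 ≤ f x) :
    mExp π n f = 0 ↔ ∀ x, ∑ i, x i ≤ n → f x = 0 := by
  rw [mExp, ← (summable_multPMF π n f).hasSum_iff,
    hasSum_zero_iff_of_nonneg fun x => mul_nonneg (multPMF_nonneg hπ hπ0 x) (hf x), funext_iff]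
  refine forall_congr' fun x => ⟨fun h hx => ?_, fun h => ?_⟩
  · exact (mul_eq_zero.mp h).resolve_left (multPMF_pos hπ hπ0 hx).ne'
  · by_cases hx : ∑ i, x i ≤ n
    · simp [h hx]
    · simp [multPMF_eq_zero hx]

lemma mExp_zero {k : ℕ} (π : Fin k → ℝ) (f : (Fin k → ℕ) → ℝ) : mExp π 0 f = f 0 := by
  rw [mExp, tsum_eq_single 0]
  · simp [multPMF]
  · intro x hx
    rw [multPMF_eq_zero, zero_mul]
    intro h
    refine hx (funext fun i => ?_)
    simpa using Finset.sum_eq_zero_iff.mp (Nat.le_zero.mp h) i (Finset.mem_univ i)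

/-! ### One step of the walk -/

/-- Step probabilities: `none` stands for the step `0`, `some i` for the step `e_i`. -/
def stepProb {k : ℕ} (π : Fin k → ℝ) : Option (Fin k) → ℝ
  | none => 1 - ∑ i, π i
  | some i => π i

/-- The step vectors, `0` and the unit vectors `e_i`. -/
def stepVec {k : ℕ} : Option (Fin k) → (Fin k → ℕ)
  | none => 0
  | some i => Pi.single i 1

/-- The averaging operator `A g (x) = E g (x + step)`. -/
def avg {k : ℕ} (π : Fin k → ℝ) (g : (Fin k → ℕ) → ℝ) (x : Fin k → ℕ) : ℝ :=
  ∑ c, stepProb π c * g (x + stepVec c)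

/-- The variance of `g (x + step)`. -/
def stepVar {k : ℕ} (π : Fin k → ℝ) (g : (Fin k → ℕ) → ℝ) (x : Fin k → ℕ) : ℝ :=
  avg π (fun y => g y ^ 2) x - avg π g x ^ 2

/-- The interaction part of `(c, d) ↦ g (x + e_c + e_d)` in its Hoeffding decomposition. -/
def interaction {k : ℕ} (π : Fin k → ℝ) (g : (Fin k → ℕ) → ℝ) (x : Fin k → ℕ)
    (c d : Option (Fin k)) : ℝ :=
  g (x + stepVec c + stepVec d) - avg π g (x + stepVec c) - avg π g (x + stepVec d)
    + avg π (avg π g) x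

/-- Second moment of the interaction part. -/
def interactionSq {k : ℕ} (π : Fin k → ℝ) (g : (Fin k → ℕ) → ℝ) (x : Fin k → ℕ) : ℝ :=
  ∑ c, ∑ d, stepProb π c * stepProb π d * interaction π g x c d ^ 2

lemma sum_stepProb {k : ℕ} (π : Fin k → ℝ) : ∑ c, stepProb π c = 1 := by
  simp [Fintype.sum_option, stepProb]

lemma stepProb_pos {k : ℕ} {π : Fin k → ℝ} (hπ : ∀ i, 0 < π i) (hπ0 : 0 < 1 - ∑ i, π i)
    (c : Option (Fin k)) : 0 < stepProb π c := by
  cases c with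
  | none => exact hπ0
  | some i => exact hπ i

lemma sum_stepVec_le {k : ℕ} (x : Fin k → ℕ) (c : Option (Fin k)) :
    ∑ j, (x + stepVec c) j ≤ ∑ j, x j + 1 := by
  cases c with
  | none => simp [stepVec]
  | some i => exact (sum_add_single x i).le

/-- Conditioning on the last step. It follows from the two step-removal identities by writing
`n + 1 = (n + 1 - ∑ x_i) + ∑ x_i`. -/
lemma mExp_succ {k : ℕ} (π : Fin k → ℝ) (n : ℕ) (f : (Fin k → ℕ) → ℝ) :
    mExp π (n + 1) f = mExp π n (avg π f) := by
  have hn : (n : ℝ) + 1 ≠ 0 := by positivity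
  have hnone : mExp π (n + 1) (fun x => ((n : ℝ) + 1 - ∑ i, (x i : ℝ)) * f x)
      = (n + 1) * ((1 - ∑ i, π i) * mExp π n f) := by
    rw [← mExp_const_mul, ← mExp_const_mul]
    refine tsum_congr fun x => ?_
    linear_combination f x * multPMF_succ_none n π x
  have hsome : ∀ i, mExp π (n + 1) (fun x => (x i : ℝ) * f x)
      = (n + 1) * (π i * mExp π n (fun x => f (x + Pi.single i 1))) := by
    intro i
    rw [← mExp_const_mul, ← mExp_const_mul, mExp,
      ← (add_left_injective (Pi.single i 1 : Fin k → ℕ)).tsum_eq]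
    · refine tsum_congr fun x => ?_
      have h := multPMF_succ_some n π x i
      simp only [Pi.add_apply, Pi.single_eq_same, Nat.cast_add, Nat.cast_one] at h ⊢
      linear_combination f (x + Pi.single i 1) * h
    · intro x hx
      have hxi : x i ≠ 0 := by
        intro h
        simp [h] at hx
      refine ⟨x - Pi.single i 1, ?_⟩
      ext j
      by_cases hj : j = i
      · subst hj; simp; omega
      · simp [hj]
  have hsplit : ((n : ℝ) + 1) * mExp π (n + 1) f
      = mExp π (n + 1) (fun x => ((n : ℝ) + 1 - ∑ i, (x i : ℝ)) * f x)
        + ∑ i, mExp π (n + 1) (fun x => (x i : ℝ) * f x) := by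
    rw [← mExp_sum, ← mExp_add, ← mExp_const_mul]
    congr 1
    ext x
    rw [← Finset.sum_mul]; ring
  have havg : mExp π n (avg π f) = (1 - ∑ i, π i) * mExp π n f
      + ∑ i, π i * mExp π n (fun x => f (x + Pi.single i 1)) := by
    unfold avg
    rw [mExp_sum, Fintype.sum_option]
    simp [mExp_const_mul, stepProb, stepVec]
  rw [hnone] at hsplit
  simp_rw [hsome] at hsplit
  rw [← Finset.mul_sum, ← mul_add, ← havg] at hsplit
  exact mul_left_cancel₀ hn hsplit

lemma mExp_const {k : ℕ} (π : Fin k → ℝ) (n : ℕ) (a : ℝ) : mExp π n (fun _ => a) = a := by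
  induction n with
  | zero => exact mExp_zero π _
  | succ n ih =>
    rw [mExp_succ]
    have : avg π (fun _ => a) = fun _ => a := by
      ext x
      rw [avg, ← Finset.sum_mul, sum_stepProb, one_mul]
    rw [this, ih]

lemma mExp_variance {k : ℕ} (π : Fin k → ℝ) (n : ℕ) (g : (Fin k → ℕ) → ℝ) :
    mExp π n (fun x => (g x - mExp π n g) ^ 2)
      = mExp π n (fun x => g x ^ 2) - mExp π n g ^ 2 := by
  have : (fun x => (g x - mExp π n g) ^ 2)
      = fun x => (g x ^ 2 - 2 * mExp π n g * g x) + mExp π n g ^ 2 := by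
    ext x; ring
  rw [this, mExp_add, mExp_sub, mExp_const_mul, mExp_const]
  ring

lemma quadForm_multSigma {k : ℕ} (n : ℕ) (π : Fin k → ℝ) (v : Fin k → ℝ) :
    quadForm (multSigma k n π) v = n * (∑ i, π i * v i ^ 2 - (∑ i, π i * v i) ^ 2) := by
  have h : ∀ i j, v i * multSigma k n π i j * v j
      = (if i = j then n * (π i * v i ^ 2) else 0) - n * ((π i * v i) * (π j * v j)) := by
    intro i j
    unfold multSigma
    split_ifs with hij
    · subst hij; ring
    · ring
  unfold quadForm
  simp_rw [h, Finset.sum_sub_distrib]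
  rw [mul_sub, sq (∑ i, π i * v i), Finset.sum_mul_sum]
  simp [Finset.mul_sum]

lemma quadForm_fd {k : ℕ} (n : ℕ) (π : Fin k → ℝ) (g : (Fin k → ℕ) → ℝ) (x : Fin k → ℕ) :
    quadForm (multSigma k n π) (fun i => fd g i x) = n * stepVar π g x := by
  have hup : ∀ i, Function.update x i (x i + 1) = x + Pi.single i 1 := by
    intro i
    ext j
    by_cases hj : j = i
    · subst hj; simp
    · simp [hj]
  rw [quadForm_multSigma]
  congr 1
  simp only [stepVar, avg, Fintype.sum_option, stepProb, stepVec, add_zero, fd, hup]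
  have h1 : ∀ i, π i * (g (x + Pi.single i 1) - g x) ^ 2
      = π i * g (x + Pi.single i 1) ^ 2 - 2 * g x * (π i * g (x + Pi.single i 1))
        + g x ^ 2 * π i := fun i => by ring
  have h2 : ∀ i, π i * (g (x + Pi.single i 1) - g x)
      = π i * g (x + Pi.single i 1) - g x * π i := fun i => by ring
  simp_rw [h1, h2, Finset.sum_add_distrib, Finset.sum_sub_distrib, ← Finset.mul_sum]
  ring

/-! ### The gap in the Efron-Stein inequality -/

/-- Pythagoras for the Hoeffding decomposition of a symmetric function `G` of two independent
variables with law `p`; `R` is its conditional expectation and `m` its mean. -/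
lemma hoeffding_two {ι : Type*} [Fintype ι] (p : ι → ℝ) (hp : ∑ c, p c = 1) (G : ι → ι → ℝ)
    (hG : ∀ c d, G c d = G d c) (R : ι → ℝ) (hR : ∀ c, R c = ∑ d, p d * G c d) (m : ℝ)
    (hm : m = ∑ c, p c * R c) :
    ∑ c, ∑ d, p c * p d * (G c d - R c - R d + m) ^ 2
      = ∑ c, p c * (∑ d, p d * G c d ^ 2 - R c ^ 2) - (∑ c, p c * R c ^ 2 - m ^ 2) := by
  have hcross : ∑ c, ∑ d, p c * (p d * (G c d * R d)) = ∑ d, p d * R d ^ 2 := by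
    rw [Finset.sum_comm]
    refine Finset.sum_congr rfl fun d _ => ?_
    rw [sq, ← mul_assoc, mul_comm (p d * R d), hR d, Finset.sum_mul]
    refine Finset.sum_congr rfl fun c _ => ?_
    rw [hG c d, ← hR d]; ring
  have hinner : ∀ c, ∑ d, p c * p d * (G c d - R c - R d + m) ^ 2
      = p c * ∑ d, p d * G c d ^ 2 - 2 * ∑ d, p c * (p d * (G c d * R d))
        + p c * (∑ d, p d * R d ^ 2) - p c * (m - R c) ^ 2 := by
    intro c
    have h : ∀ d, p c * p d * (G c d - R c - R d + m) ^ 2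
        = p c * (p d * G c d ^ 2) - 2 * (p c * (p d * (G c d * R d)))
          + p c * (p d * R d ^ 2) + 2 * p c * (m - R c) * (p d * G c d)
          - 2 * p c * (m - R c) * (p d * R d) + p c * (m - R c) ^ 2 * p d := fun d => by ring
    simp_rw [h, Finset.sum_add_distrib, Finset.sum_sub_distrib, Finset.sum_add_distrib,
      Finset.sum_sub_distrib, ← Finset.mul_sum, ← hR c, ← hm, hp]
    ring
  have houter : ∑ c, p c * (m - R c) ^ 2 = ∑ c, p c * R c ^ 2 - m ^ 2 := by
    have h : ∀ c, p c * (m - R c) ^ 2 = m ^ 2 * p c - 2 * m * (p c * R c) + p c * R c ^ 2 :=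
      fun c => by ring
    simp_rw [h, Finset.sum_add_distrib, Finset.sum_sub_distrib, ← Finset.mul_sum, ← hm, hp]
    ring
  simp_rw [hinner]
  rw [Finset.sum_sub_distrib, Finset.sum_add_distrib, Finset.sum_sub_distrib, ← Finset.mul_sum,
    hcross, houter, ← Finset.sum_mul, hp]
  simp_rw [mul_sub, Finset.sum_sub_distrib]
  ring

lemma interactionSq_eq {k : ℕ} (π : Fin k → ℝ) (g : (Fin k → ℕ) → ℝ) (x : Fin k → ℕ) :
    interactionSq π g x = avg π (stepVar π g) x - stepVar π (avg π g) x :=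
  hoeffding_two (stepProb π) (sum_stepProb π) (fun c d => g (x + stepVec c + stepVec d))
    (fun c d => by rw [add_right_comm]) (fun c => avg π g (x + stepVec c)) (fun _ => rfl)
    (avg π (avg π g) x) rfl

lemma interactionSq_nonneg {k : ℕ} {π : Fin k → ℝ} (hπ : ∀ i, 0 < π i)
    (hπ0 : 0 < 1 - ∑ i, π i) (g : (Fin k → ℕ) → ℝ) (x : Fin k → ℕ) :
    0 ≤ interactionSq π g x :=
  Finset.sum_nonneg fun c _ => Finset.sum_nonneg fun d _ =>
    mul_nonneg (mul_pos (stepProb_pos hπ hπ0 c) (stepProb_pos hπ hπ0 d)).le (sq_nonneg _)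

lemma interaction_eq_zero {k : ℕ} {π : Fin k → ℝ} (hπ : ∀ i, 0 < π i)
    (hπ0 : 0 < 1 - ∑ i, π i) {g : (Fin k → ℕ) → ℝ} {x : Fin k → ℕ}
    (h : interactionSq π g x = 0) (c d : Option (Fin k)) : interaction π g x c d = 0 := by
  have hpos : ∀ c d, 0 < stepProb π c * stepProb π d := fun c d =>
    mul_pos (stepProb_pos hπ hπ0 c) (stepProb_pos hπ hπ0 d)
  have h0 : ∀ c d, 0 ≤ stepProb π c * stepProb π d * interaction π g x c d ^ 2 :=
    fun c d => mul_nonneg (hpos c d).le (sq_nonneg _)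
  have h1 := (Finset.sum_eq_zero_iff_of_nonneg
    fun c _ => Finset.sum_nonneg fun d _ => h0 c d).mp h c (Finset.mem_univ c)
  have h2 := (Finset.sum_eq_zero_iff_of_nonneg fun d _ => h0 c d).mp h1 d (Finset.mem_univ d)
  exact pow_eq_zero_iff two_ne_zero |>.mp ((mul_eq_zero.mp h2).resolve_left (hpos c d).ne')

/-- Upper bound minus variance, for `m + 1` trials. -/
noncomputable def gap {k : ℕ} (π : Fin k → ℝ) (m : ℕ) (g : (Fin k → ℕ) → ℝ) : ℝ :=
  (m + 1) * mExp π m (stepVar π g)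
    - (mExp π (m + 1) (fun x => g x ^ 2) - mExp π (m + 1) g ^ 2)

lemma gap_zero {k : ℕ} (π : Fin k → ℝ) (g : (Fin k → ℕ) → ℝ) : gap π 0 g = 0 := by
  simp [gap, mExp_succ, mExp_zero, stepVar]

lemma gap_succ {k : ℕ} (π : Fin k → ℝ) (m : ℕ) (g : (Fin k → ℕ) → ℝ) :
    gap π (m + 1) g = (m + 1) * mExp π m (interactionSq π g) + gap π m (avg π g) := by
  have h1 : mExp π m (interactionSq π g)
      = mExp π (m + 1) (stepVar π g) - mExp π m (stepVar π (avg π g)) := by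
    rw [mExp_succ, ← mExp_sub]
    congr 1
    ext x
    exact interactionSq_eq π g x
  have h2 : mExp π (m + 1) (stepVar π g)
      = mExp π (m + 1) (avg π fun y => g y ^ 2) - mExp π (m + 1) (fun x => avg π g x ^ 2) :=
    mExp_sub π _ _ _
  rw [gap, gap, h1, mExp_succ π (m + 1), mExp_succ π (m + 1) g]
  push_cast
  linear_combination h2

lemma gap_nonneg {k : ℕ} {π : Fin k → ℝ} (hπ : ∀ i, 0 < π i) (hπ0 : 0 < 1 - ∑ i, π i) (m : ℕ)
    (g : (Fin k → ℕ) → ℝ) : 0 ≤ gap π m g := by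
  induction m generalizing g with
  | zero => exact (gap_zero π g).ge
  | succ m ih =>
    rw [gap_succ]
    have h1 := mExp_nonneg hπ hπ0 m (interactionSq_nonneg hπ hπ0 g)
    have h2 := ih (avg π g)
    positivity

/-! ### Affine functions -/

/-- `g` agrees with an affine function on the support of `M_k(n, π)`. -/
def AffineUpTo {k : ℕ} (n : ℕ) (g : (Fin k → ℕ) → ℝ) : Prop :=
  ∃ (ρ0 : ℝ) (ρ : Fin k → ℝ), ∀ x : Fin k → ℕ, ∑ i, x i ≤ n →
    g x = ρ0 + ∑ i, ρ i * (x i : ℝ)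

lemma affine_of_second_difference {k n : ℕ} {g : (Fin k → ℕ) → ℝ}
    (h : ∀ x i j, ∑ l, x l + 2 ≤ n →
      g (x + Pi.single i 1 + Pi.single j 1) - g (x + Pi.single i 1) - g (x + Pi.single j 1)
        + g x = 0) :
    AffineUpTo n g := by
  have hdiff : ∀ i x, ∑ l, x l + 1 ≤ n →
      g (x + Pi.single i 1) - g x = g (Pi.single i 1) - g 0 := by
    intro i x
    induction x using induction_add_single with
    | h0 => intro _; rw [zero_add]
    | hs x j ih =>
      intro hx
      rw [sum_add_single] at hx
      rw [← ih (by omega)]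
      linarith [h x j i (by omega)]
  refine ⟨g 0, fun i => g (Pi.single i 1) - g 0, fun x => ?_⟩
  induction x using induction_add_single with
  | h0 => simp
  | hs x j ih =>
    intro hx
    rw [sum_add_single] at hx
    have h1 := ih (by omega)
    have h2 := hdiff j x hx
    have h3 : ∀ i, (g (Pi.single i 1) - g 0) * (((x + Pi.single j 1 : Fin k → ℕ) i : ℕ) : ℝ)
        = (g (Pi.single i 1) - g 0) * (x i : ℝ)
          + (if i = j then g (Pi.single j 1) - g 0 else 0) := by
      intro i
      by_cases hi : i = j
      · subst hi; simp; ring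
      · simp [hi]
    simp_rw [h3, Finset.sum_add_distrib, Finset.sum_ite_eq' Finset.univ j]
    simp only [Finset.mem_univ, if_true]
    linarith

lemma affine_of_gap_eq_zero {k : ℕ} {π : Fin k → ℝ} (hπ : ∀ i, 0 < π i)
    (hπ0 : 0 < 1 - ∑ i, π i) {m : ℕ} {g : (Fin k → ℕ) → ℝ} (h : gap π m g = 0) :
    AffineUpTo (m + 1) g := by
  refine affine_of_second_difference fun x i j hx => ?_
  obtain _ | m := m
  · omega
  rw [gap_succ] at h
  have h1 := mExp_nonneg hπ hπ0 m (interactionSq_nonneg hπ hπ0 g)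
  have h2 := gap_nonneg hπ hπ0 m (avg π g)
  have hm : (0 : ℝ) < m + 1 := by positivity
  have h3 : mExp π m (interactionSq π g) = 0 := by nlinarith
  have h4 := (mExp_eq_zero_iff hπ hπ0 m (interactionSq_nonneg hπ hπ0 g)).mp h3 x (by omega)
  have h5 := interaction_eq_zero hπ hπ0 h4
  have a := h5 (some i) (some j)
  have b := h5 (some i) none
  have c := h5 none (some j)
  have d := h5 none none
  simp only [interaction, stepVec, add_zero] at a b c d
  linarith

lemma gap_eq_zero_of_affine {k : ℕ} {π : Fin k → ℝ} (hπ : ∀ i, 0 < π i)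
    (hπ0 : 0 < 1 - ∑ i, π i) {m : ℕ} {g : (Fin k → ℕ) → ℝ} (hg : AffineUpTo (m + 1) g) :
    gap π m g = 0 := by
  induction m generalizing g with
  | zero => exact gap_zero π g
  | succ m ih =>
    obtain ⟨ρ0, ρ, hρ⟩ := hg
    set L : (Fin k → ℕ) → ℝ := fun x => ∑ i, ρ i * (x i : ℝ) with hL
    have hLadd : ∀ x y, L (x + y) = L x + L y := by
      intro x y
      simp [hL, mul_add, Finset.sum_add_distrib]
    -- `M` is the mean increment of the linear part over one step.
    set M : ℝ := ∑ c, stepProb π c * L (stepVec c) with hM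
    have hconst : ∀ a : ℝ, ∑ c, stepProb π c * (a + L (stepVec c)) = a + M := by
      intro a
      simp_rw [mul_add, Finset.sum_add_distrib, ← Finset.sum_mul, sum_stepProb]
      rw [one_mul]
    have havg : ∀ x, ∑ i, x i ≤ m + 1 → avg π g x = ρ0 + M + L x := by
      intro x hx
      have : ∀ c, g (x + stepVec c) = (ρ0 + L x) + L (stepVec c) := by
        intro c
        rw [hρ _ ((sum_stepVec_le x c).trans (by omega)), add_assoc, ← hLadd]
      simp_rw [avg, this]
      rw [hconst]; ring
    rw [gap_succ, ih ⟨ρ0 + M, ρ, havg⟩, add_zero]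
    refine mul_eq_zero_of_right _
      ((mExp_eq_zero_iff hπ hπ0 m (interactionSq_nonneg hπ hπ0 g)).mpr fun x hx => ?_)
    have hstep : ∀ c, avg π g (x + stepVec c) = (ρ0 + M + L x) + L (stepVec c) := by
      intro c
      rw [havg _ ((sum_stepVec_le x c).trans (by omega)), hLadd]; ring
    have hmean : avg π (avg π g) x = ρ0 + M + L x + M := by
      rw [avg]
      simp_rw [hstep]
      rw [hconst]
    refine Finset.sum_eq_zero fun c _ => Finset.sum_eq_zero fun d _ => ?_
    have h2 : g (x + stepVec c + stepVec d) = ρ0 + (L x + L (stepVec c) + L (stepVec d)) := by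
      have e1 := sum_stepVec_le x c
      have e2 := sum_stepVec_le (x + stepVec c) d
      rw [hρ _ (by omega), ← hLadd, ← hLadd]
    have : interaction π g x c d = 0 := by
      rw [interaction, hstep, hstep, hmean, h2]; ring
    rw [this]; ring

/-- Equality case of the multinomial Chernoff-type variance bound:
`Var g(X) = E[w(X) ∇g(X)ᵀ Σ ∇g(X)]` iff `g` is a linear function on the support of `X`. -/
theorem multinomial_variance_bound_equality_iff
    (k n : ℕ) (hk : 1 ≤ k) (hn : 1 ≤ n) (π : Fin k → ℝ)
    (hπ : ∀ i, 0 < π i ∧ π i < 1) (hπ0 : 0 < 1 - ∑ i, π i)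
    (g : (Fin k → ℕ) → ℝ) :
    (∑' x : Fin k → ℕ,
        multPMF k n π x * (g x - ∑' y : Fin k → ℕ, multPMF k n π y * g y) ^ 2)
      = (∑' x : Fin k → ℕ,
          multPMF k n π x *
            (multW k n π x * quadForm (multSigma k n π) (fun i => fd g i x)))
    ↔ ∃ (ρ0 : ℝ) (ρ : Fin k → ℝ), ∀ x : Fin k → ℕ, ∑ i, x i ≤ n →
        g x = ρ0 + ∑ i, ρ i * (x i : ℝ) := by
  obtain ⟨m, rfl⟩ : ∃ m, n = m + 1 := ⟨n - 1, by omega⟩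
  have hpos : ∀ i, 0 < π i := fun i => (hπ i).1
  have hvar := mExp_variance π (m + 1) g
  have hbound : (∑' x : Fin k → ℕ, multPMF k (m + 1) π x *
      (multW k (m + 1) π x * quadForm (multSigma k (m + 1) π) (fun i => fd g i x)))
      = (m + 1) * mExp π m (stepVar π g) := by
    rw [← mExp_const_mul]
    refine tsum_congr fun x => ?_
    rw [← mul_assoc, multPMF_mul_multW m hπ0, quadForm_fd]
    push_cast
    rfl
  rw [hbound]
  simp only [mExp] at hvar
  rw [hvar]
  refine Iff.trans ?_ (⟨affine_of_gap_eq_zero hpos hπ0, gap_eq_zero_of_affine hpos hπ0⟩ :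
    gap π m g = 0 ↔ AffineUpTo (m + 1) g)
  rw [gap, sub_eq_zero]
  exact eq_comm
end

section
/- Let X = (X_1,…,X_k) follow the negative multinomial distribution NM_k(r,θ) with dispersion matrix Σ, and let g : ℕ^k → ℝ satisfy E[ w(X) · ∇g(X)ᵀ Σ ∇g(X) ] < ∞ and Var g(X) < ∞. Then Var g(X) = E[ w(X) · ∇g(X)ᵀ Σ ∇g(X) ] holds if and only if there exist real numbers ρ_0, ρ_1, …, ρ_k such that g(x) = ρ_0 + Σ_{i=1}^k ρ_i x_i for all x ∈ ℕ^k. -/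
/-!
The variance bound and its equality case are proved together, by induction on the dimension.

Multiplying the weight of `NM_k(r, θ)` by `w` gives exactly the weight of `NM_k(r + 1, θ)`, and
`vᵀ Σ v = (r / θ₀²) Q(v)` with `Q(v) = θ₀ ∑ θᵢ vᵢ² + (∑ θᵢ vᵢ)²` (`gradForm`,
`quadForm_negMultSigma`). So the right-hand side is `(r / θ₀²) E_{r+1} Q(∇g)`.

Condition on the first coordinate. It is negative binomial with success parameter `q = θ₁ / t`,
where `t = θ₀ + θ₁`, and given the value `m` the other coordinates are `NM_{k-1}(r + m, ·)`
(`negMultPMF_cons`). Three inequalities add up to the bound: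

* the induction hypothesis bounds the variance of each slice `g(m, ·)`;
* the one-dimensional bound `negBin_variance_bound` controls the variance of the conditional mean
  `h(m)` by the mean of `(Δh)²`; it comes from Cauchy-Schwarz along the path from `y` to `x`;
* since raising the first parameter is size biasing, Stein's identity (`hasSum_negMultPMF_grad`)
  writes `Δh(m)` as the conditional mean of `u = Δ₁g + t⁻¹ ∑ θᵢ Δᵢg` (sum over the other
  coordinates), so `(Δh)²` is at most the conditional mean of `u²`.

Completing the square in the first coordinate (`gradForm_succ`) shows that the total of the three
right-hand sides is exactly `(r / θ₀²) E_{r+1} Q(∇g)`. Equality of the sums therefore forces equality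
in each step: every slice is affine, `Δh` is constant, and `u` is constant on each slice. These facts
glue to an affine `g` (`exists_affine_of_slices`). Conversely, the variance of an affine function is
computed from Stein's identity in each coordinate (`negMult_variance_affine`).
-/

open scoped BigOperators ENNReal

/-- The p.m.f. of the negative multinomial distribution `NM_k(r, θ)` on `ℕ^k`. -/
noncomputable def negMultPMF (k r : ℕ) (θ : Fin k → ℝ) (x : Fin k → ℕ) : ℝ :=
  (Nat.factorial (r + ∑ i, x i - 1) : ℝ) /
      ((∏ i, (Nat.factorial (x i) : ℝ)) * (Nat.factorial (r - 1) : ℝ)) *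
    (∏ i, θ i ^ x i) * (1 - ∑ i, θ i) ^ r

/-- The negative multinomial `w`-function: `w(x) = θ₀ (r + Σ xᵢ) / r`. -/
noncomputable def negMultW (k r : ℕ) (θ : Fin k → ℝ) (x : Fin k → ℕ) : ℝ :=
  (1 - ∑ i, θ i) * ((r : ℝ) + ∑ i, (x i : ℝ)) / (r : ℝ)

/-- The dispersion (covariance) matrix of the negative multinomial distribution. -/
noncomputable def negMultSigma (k r : ℕ) (θ : Fin k → ℝ) (i j : Fin k) : ℝ :=
  if i = j then (r : ℝ) * θ i * ((1 - ∑ s, θ s) + θ i) / (1 - ∑ s, θ s) ^ 2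
  else (r : ℝ) * θ i * θ j / (1 - ∑ s, θ s) ^ 2

/-! ### Sums against a discrete probability weight -/

section Weight

variable {α : Type*} {p : α → ℝ}

lemma summable_weight_mul (h0 : ∀ x, 0 ≤ p x) {f g : α → ℝ}
    (hf : Summable fun x => p x * f x ^ 2) (hg : Summable fun x => p x * g x ^ 2) :
    Summable fun x => p x * (f x * g x) := by
  refine Summable.of_norm_bounded (hf.add hg) fun x => ?_
  rw [Real.norm_eq_abs, abs_mul, abs_of_nonneg (h0 x), ← mul_add]
  refine mul_le_mul_of_nonneg_left ?_ (h0 x)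
  rw [abs_le]
  constructor <;> nlinarith [sq_nonneg (f x + g x), sq_nonneg (f x - g x)]

lemma summable_weight_of_sq (h0 : ∀ x, 0 ≤ p x) (hp : HasSum p 1) {f : α → ℝ}
    (hf : Summable fun x => p x * f x ^ 2) : Summable fun x => p x * f x := by
  simpa using summable_weight_mul h0 hf (g := fun _ => 1) (by simpa using hp.summable)

lemma hasSum_weight_sub_sq (hp : HasSum p 1) {f : α → ℝ}
    (hf1 : Summable fun x => p x * f x) (hf2 : Summable fun x => p x * f x ^ 2) (c : ℝ) :
    HasSum (fun x => p x * (f x - c) ^ 2)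
      (∑' x, p x * f x ^ 2 - 2 * c * ∑' x, p x * f x + c ^ 2) := by
  have h := (hf2.hasSum.sub (hf1.hasSum.mul_left (2 * c))).add (hp.mul_left (c ^ 2))
  rw [mul_one] at h
  exact h.congr_fun fun x => by ring

lemma tsum_weight_variance (hp : HasSum p 1) {f : α → ℝ}
    (hf1 : Summable fun x => p x * f x) (hf2 : Summable fun x => p x * f x ^ 2) :
    ∑' x, p x * (f x - ∑' y, p y * f y) ^ 2
      = ∑' x, p x * f x ^ 2 - (∑' x, p x * f x) ^ 2 := by
  rw [(hasSum_weight_sub_sq hp hf1 hf2 _).tsum_eq]; ring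

lemma sq_tsum_weight_le (h0 : ∀ x, 0 ≤ p x) (hp : HasSum p 1) {f : α → ℝ}
    (hf2 : Summable fun x => p x * f x ^ 2) :
    (∑' x, p x * f x) ^ 2 ≤ ∑' x, p x * f x ^ 2 := by
  have hf1 := summable_weight_of_sq h0 hp hf2
  have h := tsum_weight_variance hp hf1 hf2
  have : 0 ≤ ∑' x, p x * (f x - ∑' y, p y * f y) ^ 2 :=
    tsum_nonneg fun x => mul_nonneg (h0 x) (sq_nonneg _)
  linarith

/-- Equality case of `sq_tsum_weight_le`: zero variance forces a constant. -/
lemma eq_tsum_of_sq_tsum_weight_eq (h0 : ∀ x, 0 < p x) (hp : HasSum p 1) {f : α → ℝ}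
    (hf2 : Summable fun x => p x * f x ^ 2)
    (heq : (∑' x, p x * f x) ^ 2 = ∑' x, p x * f x ^ 2) (x : α) :
    f x = ∑' y, p y * f y := by
  have h0' := fun x => (h0 x).le
  have hf1 := summable_weight_of_sq h0' hp hf2
  have h := hasSum_weight_sub_sq hp hf1 hf2 (∑' y, p y * f y)
  have hz : ∑' x, p x * f x ^ 2 - 2 * (∑' y, p y * f y) * ∑' x, p x * f x
      + (∑' y, p y * f y) ^ 2 = 0 := by rw [← heq]; ring
  rw [hz, hasSum_zero_iff_of_nonneg fun x => mul_nonneg (h0' x) (sq_nonneg _)] at h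
  have hx := congrFun h x
  simp only [Pi.zero_apply, mul_eq_zero, (h0 x).ne', false_or] at hx
  have := pow_eq_zero_iff (two_ne_zero) |>.1 hx
  linarith

/-- Termwise comparison of two convergent series with equal sums. -/
lemma eq_of_tsum_eq_of_le {f g : α → ℝ} (hf : Summable f) (hg : Summable g)
    (hle : ∀ x, f x ≤ g x) (heq : ∑' x, f x = ∑' x, g x) (x : α) : f x = g x := by
  by_contra hne
  exact (hf.tsum_lt_tsum hle (lt_of_le_of_ne (hle x) hne) hg).ne heq

lemma summable_of_tsum_ofReal_lt_top {f : α → ℝ} (h0 : ∀ x, 0 ≤ f x)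
    (h : ∑' x, ENNReal.ofReal (f x) < ⊤) : Summable f := by
  have := ENNReal.summable_toReal h.ne
  exact this.congr fun x => ENNReal.toReal_ofReal (h0 x)

end Weight

/-! ### The one-dimensional negative binomial weight -/

/-- The negative binomial weight `C(r + m - 1, m) q ^ m (1 - q) ^ r` on `ℕ`, the one-dimensional
negative multinomial distribution. -/
noncomputable def negBin (r : ℕ) (q : ℝ) (m : ℕ) : ℝ :=
  (Nat.factorial (r + m - 1) : ℝ) / ((Nat.factorial m : ℝ) * (Nat.factorial (r - 1) : ℝ))
    * q ^ m * (1 - q) ^ r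

lemma negBin_pos {r : ℕ} {q : ℝ} (h0 : 0 < q) (h1 : q < 1) (m : ℕ) : 0 < negBin r q m := by
  have : 0 < 1 - q := by linarith
  unfold negBin
  positivity

lemma hasSum_negBin {r : ℕ} (hr : 1 ≤ r) {q : ℝ} (h0 : 0 < q) (h1 : q < 1) :
    HasSum (negBin r q) 1 := by
  obtain ⟨s, rfl⟩ := Nat.exists_eq_add_of_le' hr
  have hq : (1 - q) ≠ 0 := by linarith
  have h := (hasSum_choose_mul_geometric_of_norm_lt_one s (r := q)
    (by rw [Real.norm_eq_abs, abs_of_pos h0]; exact h1)).mul_right ((1 - q) ^ (s + 1))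
  rw [one_div_mul_cancel (pow_ne_zero _ hq)] at h
  refine h.congr_fun fun m => ?_
  have e : s + 1 + m - 1 = m + s := by omega
  rw [negBin, e, Nat.add_choose]
  rw [Nat.cast_div (Nat.factorial_mul_factorial_dvd_factorial_add m s) (by positivity)]
  push_cast
  rfl

/-- Size biasing by `r + m` raises the first parameter. -/
lemma negBin_succ_left {r : ℕ} (hr : 1 ≤ r) {q : ℝ} (h1 : q < 1) (m : ℕ) :
    negBin r q m * (r + m) = r / (1 - q) * negBin (r + 1) q m := by
  obtain ⟨s, rfl⟩ := Nat.exists_eq_add_of_le' hr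
  have hq : (1 - q) ≠ 0 := by linarith
  have e1 : s + 1 + m - 1 = s + m := by omega
  have e2 : s + 1 + 1 + m - 1 = s + m + 1 := by omega
  have e3 : s + 1 + 1 - 1 = s + 1 := by omega
  have e4 : s + 1 - 1 = s := by omega
  rw [negBin, negBin, e1, e2, e3, e4, Nat.factorial_succ, Nat.factorial_succ]
  push_cast
  field_simp
  ring

lemma negBin_succ_right {r : ℕ} (hr : 1 ≤ r) {q : ℝ} (m : ℕ) :
    negBin r q (m + 1) * ((m : ℝ) + 1) = q * (negBin r q m * (r + m)) := by
  obtain ⟨s, rfl⟩ := Nat.exists_eq_add_of_le' hr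
  have e1 : s + 1 + m - 1 = s + m := by omega
  have e2 : s + 1 + (m + 1) - 1 = s + m + 1 := by omega
  have e4 : s + 1 - 1 = s := by omega
  rw [negBin, negBin, e1, e2, e4, Nat.factorial_succ, Nat.factorial_succ]
  push_cast
  field_simp
  ring

/-- Stein's identity for the negative binomial weight, with all series shown to converge. -/
lemma negBin_stein {r : ℕ} (hr : 1 ≤ r) {q : ℝ} (h0 : 0 < q) (h1 : q < 1) {G : ℕ → ℝ}
    (hG : Summable fun m => negBin r q m * G m)
    (hmG : Summable fun m => negBin r q m * (m * G m)) :
    HasSum (fun m => negBin (r + 1) q m * (G (m + 1) - G m))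
      ((1 - q) / (r * q) * ((1 - q) * ∑' m, negBin r q m * (m * G m)
        - r * q * ∑' m, negBin r q m * G m)) := by
  have hr0 : (r : ℝ) ≠ 0 := by positivity
  have hq1 : (1 - q) ≠ 0 := by linarith
  have hA : HasSum (fun m => q * (negBin r q m * (r + m)) * G (m + 1))
      (∑' m, negBin r q m * (m * G m)) := by
    have h := (hasSum_nat_add_iff' 1).2 hmG.hasSum
    simp only [Finset.sum_range_one, Nat.cast_zero, zero_mul, mul_zero, sub_zero] at h
    refine h.congr_fun fun m => ?_
    rw [← negBin_succ_right hr]; push_cast; ring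
  have hB := (hG.hasSum.mul_left (r : ℝ)).add hmG.hasSum
  have hT := ((hA.mul_left (1 / q)).sub hB).mul_left ((1 - q) / r)
  have hv : (1 - q) / (r * q) * ((1 - q) * ∑' m, negBin r q m * (m * G m)
        - r * q * ∑' m, negBin r q m * G m)
      = (1 - q) / r * (1 / q * ∑' m, negBin r q m * (m * G m)
        - (r * ∑' m, negBin r q m * G m + ∑' m, negBin r q m * (m * G m))) := by
    field_simp
    ring
  rw [hv]
  refine hT.congr_fun fun m => ?_
  have h := negBin_succ_left hr h1 (q := q) m
  have h' : negBin (r + 1) q m = (1 - q) / r * (negBin r q m * (r + m)) := by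
    rw [h]; field_simp
  rw [h']
  field_simp

lemma summable_negBin_mul {r : ℕ} (hr : 1 ≤ r) {q : ℝ} (h0 : 0 < q) (h1 : q < 1) :
    Summable fun m : ℕ => negBin r q m * m := by
  have h := ((hasSum_negBin (r := r + 1) (by omega) h0 h1).summable.mul_left (r / (1 - q))).sub
    ((hasSum_negBin hr h0 h1).summable.mul_left (r : ℝ))
  refine h.congr fun m => ?_
  rw [← negBin_succ_left hr h1]; ring

/-- Partial sums of the squared increments of `h`. -/
def sqIncr (h : ℕ → ℝ) (m : ℕ) : ℝ := ∑ j ∈ Finset.range m, (h (j + 1) - h j) ^ 2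

lemma sqIncr_succ (h : ℕ → ℝ) (m : ℕ) :
    sqIncr h (m + 1) = sqIncr h m + (h (m + 1) - h m) ^ 2 := Finset.sum_range_succ _ _

lemma sqIncr_nonneg (h : ℕ → ℝ) (m : ℕ) : 0 ≤ sqIncr h m :=
  Finset.sum_nonneg fun _ _ => sq_nonneg _

lemma sqIncr_mono (h : ℕ → ℝ) : Monotone (sqIncr h) :=
  monotone_nat_of_le_succ fun m => by rw [sqIncr_succ]; nlinarith [sq_nonneg (h (m + 1) - h m)]

/-- Cauchy-Schwarz along the path from `y` to `x`. -/
lemma sq_sub_le_sqIncr (h : ℕ → ℝ) (x y : ℕ) :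
    (h x - h y) ^ 2 ≤ ((x : ℝ) - y) * (sqIncr h x - sqIncr h y) := by
  wlog hyx : y ≤ x generalizing x y
  · have := this y x (by omega)
    nlinarith
  have h1 : h x - h y = ∑ j ∈ Finset.Ico y x, (h (j + 1) - h j) := by
    rw [Finset.sum_Ico_eq_sub _ hyx, Finset.sum_range_sub, Finset.sum_range_sub]; ring
  have h2 : sqIncr h x - sqIncr h y = ∑ j ∈ Finset.Ico y x, (h (j + 1) - h j) ^ 2 := by
    rw [Finset.sum_Ico_eq_sub _ hyx]; rfl
  have h3 := sq_sum_le_card_mul_sum_sq (s := Finset.Ico y x) (f := fun j => h (j + 1) - h j)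
  rw [Nat.card_Ico, Nat.cast_sub hyx] at h3
  rw [h1, h2]
  exact h3

/-- If Cauchy-Schwarz is an equality along every path starting at `0`, the increments are all
equal. -/
lemma incr_eq_of_sq_eq_sqIncr {h : ℕ → ℝ} (heq : ∀ x : ℕ, (h x - h 0) ^ 2 = x * sqIncr h x) :
    ∀ m, h (m + 1) - h m = h 1 - h 0 := by
  have key : ∀ m : ℕ, h m - h 0 = m * (h 1 - h 0) ∧ sqIncr h m = m * (h 1 - h 0) ^ 2 ∧
      h (m + 1) - h m = h 1 - h 0 := by
    intro m
    induction m with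
    | zero => simp [sqIncr]
    | succ n ih =>
      obtain ⟨i1, i2, i3⟩ := ih
      have j1 : h (n + 1) - h 0 = ((n + 1 : ℕ) : ℝ) * (h 1 - h 0) := by
        push_cast; linarith
      have j2 : sqIncr h (n + 1) = ((n + 1 : ℕ) : ℝ) * (h 1 - h 0) ^ 2 := by
        rw [sqIncr_succ, i2, i3]; push_cast; ring
      refine ⟨j1, j2, ?_⟩
      have e := heq (n + 2)
      rw [sqIncr_succ, j2] at e
      have e2 : h (n + 2) - h 0 = (h (n + 1 + 1) - h (n + 1)) + ((n + 1 : ℕ) : ℝ) * (h 1 - h 0) := by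
        rw [← j1]; ring
      rw [e2] at e
      push_cast at e
      -- With `d` the new increment and `c` the common one, equality reads `(n + 1) (d - c)² = 0`.
      have e3 : ((n : ℝ) + 1) * ((h (n + 1 + 1) - h (n + 1)) - (h 1 - h 0)) ^ 2 = 0 := by
        linear_combination -e
      have hn : ((n : ℝ) + 1) ≠ 0 := by positivity
      rw [mul_eq_zero, pow_eq_zero_iff two_ne_zero] at e3
      have := e3.resolve_left hn
      linarith
  exact fun m => (key m).2.2

/-- A finite Dirichlet energy gives `sqIncr h` a finite first moment against `m`: by the recursion
for the weight the partial sums `S` satisfy `S ≤ c S + K` with `c < 1`. -/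
lemma summable_negBin_mul_sqIncr {r : ℕ} (hr : 1 ≤ r) {q : ℝ} (h0 : 0 < q) (h1 : q < 1)
    {h : ℕ → ℝ} (hd : Summable fun m => negBin (r + 1) q m * (h (m + 1) - h m) ^ 2) :
    Summable fun m : ℕ => negBin r q m * (m * sqIncr h m) := by
  have hpos : ∀ m, 0 ≤ negBin r q m := fun m => (negBin_pos h0 h1 m).le
  have hq1 : 0 < 1 - q := by linarith
  have hnn : ∀ m : ℕ, 0 ≤ negBin r q m * (m * sqIncr h m) := fun m =>
    mul_nonneg (hpos m) (mul_nonneg (Nat.cast_nonneg _) (sqIncr_nonneg h m))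
  obtain ⟨M, hM⟩ := exists_nat_ge (q * r / ((1 - q) / 2))
  rw [div_le_iff₀ (by positivity)] at hM
  set D := ∑' m, negBin (r + 1) q m * (h (m + 1) - h m) ^ 2
  set K := q * (r / (1 - q)) * D + q * r * sqIncr h M
  refine summable_of_sum_range_le (c := K / ((1 - q) / 2)) hnn fun N => ?_
  rw [le_div_iff₀ (by positivity)]
  set S := ∑ m ∈ Finset.range N, negBin r q m * (m * sqIncr h m) with hS
  have step1 : S ≤ ∑ m ∈ Finset.range N, q * (negBin r q m * (r + m)) * sqIncr h (m + 1) := by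
    have e := Finset.sum_range_succ' (fun m : ℕ => negBin r q m * (m * sqIncr h m)) N
    rw [Finset.sum_range_succ] at e
    have e2 : ∑ m ∈ Finset.range N, q * (negBin r q m * (r + m)) * sqIncr h (m + 1)
        = ∑ m ∈ Finset.range N, negBin r q (m + 1) * ((m + 1 : ℕ) * sqIncr h (m + 1)) :=
      Finset.sum_congr rfl fun m _ => by rw [← negBin_succ_right hr]; push_cast; ring
    rw [e2]
    have := hnn N
    simp only [Nat.cast_zero, zero_mul, mul_zero, add_zero] at e
    linarith
  have step2 : ∀ m, q * (negBin r q m * (r + m)) * sqIncr h (m + 1)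
      ≤ q * (r / (1 - q)) * (negBin (r + 1) q m * (h (m + 1) - h m) ^ 2)
        + (q + (1 - q) / 2) * (negBin r q m * (m * sqIncr h m))
        + q * r * sqIncr h M * negBin r q m := by
    intro m
    have e : q * (negBin r q m * (r + m)) * sqIncr h (m + 1)
        = q * (r / (1 - q)) * (negBin (r + 1) q m * (h (m + 1) - h m) ^ 2)
          + q * (negBin r q m * (m * sqIncr h m)) + negBin r q m * (q * r * sqIncr h m) := by
      rw [sqIncr_succ]
      linear_combination q * (h (m + 1) - h m) ^ 2 * negBin_succ_left hr h1 (q := q) m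
    have hm : q * r * sqIncr h m ≤ (1 - q) / 2 * (m * sqIncr h m) + q * r * sqIncr h M := by
      have hG := sqIncr_nonneg h m
      have hGM := sqIncr_nonneg h M
      have hqr : 0 ≤ q * r := by positivity
      rcases le_total m M with hmM | hmM
      · have := mul_le_mul_of_nonneg_left (sqIncr_mono h hmM) hqr
        have : 0 ≤ (1 - q) / 2 * (m * sqIncr h m) := by positivity
        linarith
      · have hc : (M : ℝ) ≤ m := by exact_mod_cast hmM
        have : q * r ≤ (1 - q) / 2 * m := by nlinarith
        have := mul_le_mul_of_nonneg_right this hG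
        have : 0 ≤ q * r * sqIncr h M := by positivity
        linarith
    have := mul_le_mul_of_nonneg_left hm (hpos m)
    rw [e]
    linarith
  have step3 := step1.trans (Finset.sum_le_sum fun m _ => step2 m)
  rw [Finset.sum_add_distrib, Finset.sum_add_distrib, ← Finset.mul_sum, ← Finset.mul_sum,
    ← Finset.mul_sum, ← hS] at step3
  have hD : ∑ m ∈ Finset.range N, negBin (r + 1) q m * (h (m + 1) - h m) ^ 2 ≤ D :=
    hd.sum_le_tsum _ fun m _ => mul_nonneg (negBin_pos h0 h1 m).le (sq_nonneg _)
  have h1' : ∑ m ∈ Finset.range N, negBin r q m ≤ 1 :=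
    sum_le_hasSum _ (fun m _ => hpos m) (hasSum_negBin hr h0 h1)
  have a1 : q * (r / (1 - q)) * ∑ m ∈ Finset.range N, negBin (r + 1) q m * (h (m + 1) - h m) ^ 2
      ≤ q * (r / (1 - q)) * D := mul_le_mul_of_nonneg_left hD (by positivity)
  have a2 : q * r * sqIncr h M * ∑ m ∈ Finset.range N, negBin r q m ≤ q * r * sqIncr h M * 1 :=
    mul_le_mul_of_nonneg_left h1' (mul_nonneg (by positivity) (sqIncr_nonneg h M))
  show S * ((1 - q) / 2) ≤ q * (r / (1 - q)) * D + q * r * sqIncr h M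
  linarith

/-- The Chernoff-type variance bound for the negative binomial weight with its equality case.
Twice the variance is the double sum of `(h x - h y)²`. By Cauchy-Schwarz this is at most the double
sum of `(x - y) (G x - G y)` with `G = sqIncr h`, which is twice the covariance of `x` and `G`, and
Stein's identity turns that covariance into the mean of `(Δh)²`. -/
lemma negBin_variance_bound {r : ℕ} (hr : 1 ≤ r) {q : ℝ} (h0 : 0 < q) (h1 : q < 1)
    {h : ℕ → ℝ} (h2 : Summable fun m => negBin r q m * h m ^ 2)
    (hd : Summable fun m => negBin (r + 1) q m * (h (m + 1) - h m) ^ 2) :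
    ∑' m, negBin r q m * h m ^ 2 - (∑' m, negBin r q m * h m) ^ 2
      ≤ r * q / (1 - q) ^ 2 * ∑' m, negBin (r + 1) q m * (h (m + 1) - h m) ^ 2 ∧
    (∑' m, negBin r q m * h m ^ 2 - (∑' m, negBin r q m * h m) ^ 2
      = r * q / (1 - q) ^ 2 * ∑' m, negBin (r + 1) q m * (h (m + 1) - h m) ^ 2 →
      ∀ m, h (m + 1) - h m = h 1 - h 0) := by
  have hpos : ∀ m, 0 ≤ negBin r q m := fun m => (negBin_pos h0 h1 m).le
  have hq1 : 0 < 1 - q := by linarith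
  have hr0 : (0 : ℝ) < r := by positivity
  have hp := hasSum_negBin hr h0 h1
  have hh := summable_weight_of_sq hpos hp h2
  have hmG := summable_negBin_mul_sqIncr hr h0 h1 hd
  have hm := summable_negBin_mul hr h0 h1
  have hG : Summable fun m => negBin r q m * sqIncr h m := by
    refine Summable.of_nonneg_of_le (fun m => mul_nonneg (hpos m) (sqIncr_nonneg h m))
      (fun m => ?_) hmG
    refine mul_le_mul_of_nonneg_left ?_ (hpos m)
    rcases Nat.eq_zero_or_pos m with rfl | hm0
    · simp [sqIncr]
    · exact le_mul_of_one_le_left (sqIncr_nonneg h m) (by exact_mod_cast hm0)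
  have sG := (negBin_stein hr h0 h1 hG hmG).tsum_eq
  have s1 := (negBin_stein hr h0 h1 (G := fun _ => 1) (by simpa using hp.summable)
    (by simpa using hm)).tsum_eq
  simp only [sqIncr_succ, add_sub_cancel_left] at sG
  simp only [sub_self, mul_zero, tsum_zero, mul_one, hp.tsum_eq] at s1
  set E1 := ∑' m : ℕ, negBin r q m * (m : ℝ)
  set EG := ∑' m, negBin r q m * sqIncr h m
  set EmG := ∑' m : ℕ, negBin r q m * (m * sqIncr h m)
  set Eh := ∑' m, negBin r q m * h m
  set Eh2 := ∑' m, negBin r q m * h m ^ 2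
  set D := ∑' m, negBin (r + 1) q m * (h (m + 1) - h m) ^ 2
  have hE1 : (1 - q) * E1 = r * q := by
    have : (1 - q) / (r * q) ≠ 0 := by positivity
    have := (mul_eq_zero.1 s1.symm).resolve_left this
    linarith
  have hcov : r * q / (1 - q) ^ 2 * D = EmG - E1 * EG := by
    rw [sG]
    have : E1 = r * q / (1 - q) := by field_simp; linarith
    rw [this]; field_simp
  have inF : ∀ y, HasSum (fun x => negBin r q x * (h x - h y) ^ 2)
      (Eh2 - 2 * h y * Eh + h y ^ 2) := fun y => hasSum_weight_sub_sq hp hh h2 (h y)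
  have inG : ∀ y : ℕ, HasSum (fun x : ℕ => negBin r q x *
      (((x : ℝ) - y) * (sqIncr h x - sqIncr h y)))
      (EmG - y * EG - sqIncr h y * E1 + y * sqIncr h y) := fun y => by
    have := ((hmG.hasSum.sub (hG.hasSum.mul_left (y : ℝ))).sub
      (hm.hasSum.mul_left (sqIncr h y))).add (hp.mul_left (y * sqIncr h y))
    rw [mul_one] at this
    exact this.congr_fun fun x => by ring
  have le : ∀ y x : ℕ, negBin r q x * (h x - h y) ^ 2
      ≤ negBin r q x * (((x : ℝ) - y) * (sqIncr h x - sqIncr h y)) := fun y x =>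
    mul_le_mul_of_nonneg_left (sq_sub_le_sqIncr h x y) (hpos x)
  have inle : ∀ y : ℕ, negBin r q y * (Eh2 - 2 * h y * Eh + h y ^ 2)
      ≤ negBin r q y * (EmG - y * EG - sqIncr h y * E1 + y * sqIncr h y) := fun y =>
    mul_le_mul_of_nonneg_left (hasSum_le (le y) (inF y) (inG y)) (hpos y)
  have outF : HasSum (fun y => negBin r q y * (Eh2 - 2 * h y * Eh + h y ^ 2))
      (2 * (Eh2 - Eh ^ 2)) := by
    have := ((hp.mul_left Eh2).sub (hh.hasSum.mul_left (2 * Eh))).add h2.hasSum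
    have e : Eh2 * 1 - 2 * Eh * Eh + Eh2 = 2 * (Eh2 - Eh ^ 2) := by ring
    rw [← e]
    exact this.congr_fun fun y => by ring
  have outG : HasSum (fun y : ℕ => negBin r q y *
      (EmG - y * EG - sqIncr h y * E1 + y * sqIncr h y)) (2 * (EmG - E1 * EG)) := by
    have := (((hp.mul_left EmG).sub (hm.hasSum.mul_left EG)).sub
      (hG.hasSum.mul_left E1)).add hmG.hasSum
    have e : EmG * 1 - EG * E1 - E1 * EG + EmG = 2 * (EmG - E1 * EG) := by ring
    rw [← e]
    exact this.congr_fun fun y => by ring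
  rw [hcov]
  refine ⟨by linarith [hasSum_le inle outF outG], fun heq => ?_⟩
  refine incr_eq_of_sq_eq_sqIncr fun x => ?_
  have t0 := eq_of_tsum_eq_of_le outF.summable outG.summable inle
    (by rw [outF.tsum_eq, outG.tsum_eq, heq]) 0
  have t1 := mul_left_cancel₀ (negBin_pos h0 h1 0).ne' t0
  have t2 := eq_of_tsum_eq_of_le (inF 0).summable (inG 0).summable (le 0)
    (by rw [(inF 0).tsum_eq, (inG 0).tsum_eq, t1]) x
  have t3 := mul_left_cancel₀ (negBin_pos h0 h1 x).ne' t2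
  simpa [sqIncr] using t3

/-! ### The negative multinomial weight -/

lemma negMultPMF_pos {k r : ℕ} {θ : Fin k → ℝ} (hθ : ∀ i, 0 < θ i) (h0 : 0 < 1 - ∑ i, θ i)
    (x : Fin k → ℕ) : 0 < negMultPMF k r θ x := by
  unfold negMultPMF
  have : 0 < ∏ i, θ i ^ x i := Finset.prod_pos fun i _ => pow_pos (hθ i) _
  have : 0 < ∏ i, (Nat.factorial (x i) : ℝ) := Finset.prod_pos fun i _ => by positivity
  positivity

/-- The first coordinate of `NM_{k+1}(r, θ)` is negative binomial, and given that it equals `m` the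
other coordinates are `NM_k(r + m, tail θ)`. -/
lemma negMultPMF_cons {k r : ℕ} (hr : 1 ≤ r) {θ : Fin (k + 1) → ℝ}
    (ht : 0 < 1 - ∑ i, Fin.tail θ i) (m : ℕ) (x : Fin k → ℕ) :
    negMultPMF (k + 1) r θ (Fin.cons m x)
      = negBin r (θ 0 / (1 - ∑ i, Fin.tail θ i)) m * negMultPMF k (r + m) (Fin.tail θ) x := by
  have hs : 1 - ∑ i, θ i = (1 - ∑ i, Fin.tail θ i) - θ 0 := by
    rw [Fin.sum_univ_succ]; simp only [Fin.tail]; ring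
  unfold negMultPMF negBin
  rw [hs]
  simp only [Fin.sum_univ_succ, Fin.prod_univ_succ, Fin.cons_zero, Fin.cons_succ]
  set t := 1 - ∑ i, Fin.tail θ i
  have e1 : r + (m + ∑ i, x i) - 1 = r + m + ∑ i, x i - 1 := by omega
  have e2 : 1 - θ 0 / t = (t - θ 0) / t := by field_simp
  have hP : ∏ i, (Nat.factorial (x i) : ℝ) ≠ 0 :=
    Finset.prod_ne_zero_iff.2 fun i _ => by positivity
  rw [e1, e2, div_pow, div_pow, pow_add]
  simp only [Fin.tail]
  field_simp

/-- Size biasing by `r + ∑ xᵢ` raises the first parameter. -/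
lemma negMultPMF_succ_left {k r : ℕ} (hr : 1 ≤ r) {θ : Fin k → ℝ} (h0 : 0 < 1 - ∑ i, θ i)
    (x : Fin k → ℕ) :
    negMultPMF k r θ x * (r + ∑ i, (x i : ℝ))
      = r / (1 - ∑ i, θ i) * negMultPMF k (r + 1) θ x := by
  obtain ⟨s, rfl⟩ := Nat.exists_eq_add_of_le' hr
  have e1 : s + 1 + ∑ i, x i - 1 = s + ∑ i, x i := by omega
  have e2 : s + 1 + 1 + ∑ i, x i - 1 = s + ∑ i, x i + 1 := by omega
  have e3 : s + 1 + 1 - 1 = s + 1 := by omega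
  have e4 : s + 1 - 1 = s := by omega
  have hP : ∏ i, (Nat.factorial (x i) : ℝ) ≠ 0 :=
    Finset.prod_ne_zero_iff.2 fun i _ => by positivity
  rw [negMultPMF, negMultPMF, e1, e2, e3, e4, Nat.factorial_succ, Nat.factorial_succ]
  push_cast
  field_simp
  ring

lemma negMultPMF_succ_right {k r : ℕ} (hr : 1 ≤ r) {θ : Fin k → ℝ} (i : Fin k)
    (x : Fin k → ℕ) :
    negMultPMF k r θ (Function.update x i (x i + 1)) * ((x i : ℝ) + 1)
      = θ i * (negMultPMF k r θ x * (r + ∑ i, (x i : ℝ))) := by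
  obtain ⟨s, rfl⟩ := Nat.exists_eq_add_of_le' hr
  have hP : ∀ s : Finset (Fin k), ∏ i ∈ s, (Nat.factorial (x i) : ℝ) ≠ 0 := fun s =>
    Finset.prod_ne_zero_iff.2 fun i _ => by positivity
  have hsum : ∑ j, Function.update x i (x i + 1) j = ∑ j, x j + 1 := by
    rw [← Finset.add_sum_erase _ _ (Finset.mem_univ i),
      ← Finset.add_sum_erase _ x (Finset.mem_univ i), Function.update_self]
    rw [Finset.sum_congr rfl fun j hj => Function.update_of_ne (Finset.ne_of_mem_erase hj) _ _]
    ring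
  have hfac : ∏ j, (Nat.factorial (Function.update x i (x i + 1) j) : ℝ)
      = (x i + 1) * ∏ j, (Nat.factorial (x j) : ℝ) := by
    rw [← Finset.mul_prod_erase _ _ (Finset.mem_univ i),
      ← Finset.mul_prod_erase _ (fun j => (Nat.factorial (x j) : ℝ)) (Finset.mem_univ i),
      Function.update_self, Nat.factorial_succ]
    rw [Finset.prod_congr rfl fun j hj => by
      rw [Function.update_of_ne (Finset.ne_of_mem_erase hj)]]
    push_cast
    ring
  have hpow : ∏ j, θ j ^ (Function.update x i (x i + 1) j) = θ i * ∏ j, θ j ^ x j := by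
    rw [← Finset.mul_prod_erase _ _ (Finset.mem_univ i),
      ← Finset.mul_prod_erase _ (fun j => θ j ^ x j) (Finset.mem_univ i),
      Function.update_self, pow_succ]
    rw [Finset.prod_congr rfl fun j hj => by
      rw [Function.update_of_ne (Finset.ne_of_mem_erase hj)]]
    ring
  have e1 : s + 1 + ∑ i, x i - 1 = s + ∑ i, x i := by omega
  have e2 : s + 1 + (∑ i, x i + 1) - 1 = s + ∑ i, x i + 1 := by omega
  have e4 : s + 1 - 1 = s := by omega
  have hPu := hP Finset.univ
  have hx : (x i : ℝ) + 1 ≠ 0 := by positivity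
  rw [negMultPMF, negMultPMF, hsum, hfac, hpow, e1, e2, e4, Nat.factorial_succ]
  push_cast
  field_simp
  ring

/-- Fubini along `(m, x) ↦ Fin.cons m x` for a summable family that factors through a positive
weight `n m` of the first coordinate. -/
lemma hasSum_fin_cons {k : ℕ} {F : (Fin (k + 1) → ℕ) → ℝ} (hF : Summable F)
    {n : ℕ → ℝ} (hn : ∀ m, 0 < n m) {f : ℕ → (Fin k → ℕ) → ℝ}
    (hfac : ∀ m x, F (Fin.cons m x) = n m * f m x) :
    (∀ m, Summable (f m)) ∧ HasSum (fun m => n m * ∑' x, f m x) (∑' z, F z) := by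
  have hF' : Summable fun z : ℕ × (Fin k → ℕ) => F (Fin.cons z.1 z.2) :=
    (Fin.consEquiv (fun _ => ℕ)).summable_iff.2 hF
  have hsum : ∑' z : ℕ × (Fin k → ℕ), F (Fin.cons z.1 z.2) = ∑' z, F z :=
    (Fin.consEquiv (fun _ => ℕ)).tsum_eq F
  have h1 := hF'.prod_factor
  have h2 := hF'.hasSum.prod_fiberwise fun m => (h1 m).hasSum
  rw [hsum] at h2
  simp only [hfac, tsum_mul_left] at h1 h2
  exact ⟨fun m => (summable_mul_left_iff (hn m).ne').1 (h1 m), h2⟩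

lemma one_sub_sum_tail_pos {k : ℕ} {θ : Fin (k + 1) → ℝ} (hθ : ∀ i, 0 < θ i)
    (h0 : 0 < 1 - ∑ i, θ i) : 0 < 1 - ∑ i, Fin.tail θ i := by
  rw [Fin.sum_univ_succ] at h0
  have := hθ 0
  simp only [Fin.tail]
  linarith

lemma head_div_lt_one {k : ℕ} {θ : Fin (k + 1) → ℝ} (hθ : ∀ i, 0 < θ i)
    (h0 : 0 < 1 - ∑ i, θ i) : θ 0 / (1 - ∑ i, Fin.tail θ i) < 1 := by
  rw [div_lt_one (one_sub_sum_tail_pos hθ h0)]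
  rw [Fin.sum_univ_succ] at h0
  simp only [Fin.tail]
  linarith

lemma hasSum_negMultPMF (k : ℕ) : ∀ {r : ℕ}, 1 ≤ r → ∀ {θ : Fin k → ℝ}, (∀ i, 0 < θ i) →
    0 < 1 - ∑ i, θ i → HasSum (negMultPMF k r θ) 1 := by
  induction k with
  | zero =>
    intro r hr θ _ _
    have : negMultPMF 0 r θ = fun _ => 1 := by
      funext x
      simp [negMultPMF, Nat.factorial_ne_zero (r - 1)]
    rw [this]
    simp
  | succ k ih =>
    intro r hr θ hθ h0
    have ht := one_sub_sum_tail_pos hθ h0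
    have hq := head_div_lt_one hθ h0
    have hq0 : 0 < θ 0 / (1 - ∑ i, Fin.tail θ i) := div_pos (hθ 0) ht
    have hN := hasSum_negBin hr hq0 hq
    have hK : ∀ m, HasSum (negMultPMF k (r + m) (Fin.tail θ)) 1 := fun m =>
      ih (by omega) (fun i => hθ i.succ) ht
    have hs : Summable fun z : ℕ × (Fin k → ℕ) => negMultPMF (k + 1) r θ (Fin.cons z.1 z.2) := by
      refine (summable_prod_of_nonneg fun z => (negMultPMF_pos hθ h0 _).le).2 ⟨fun m => ?_, ?_⟩
      · simp only [negMultPMF_cons hr ht]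
        exact (hK m).summable.mul_left _
      · simp only [negMultPMF_cons hr ht, tsum_mul_left, (hK _).tsum_eq, mul_one]
        exact hN.summable
    have hs' : Summable (negMultPMF (k + 1) r θ) := (Fin.consEquiv (fun _ => ℕ)).summable_iff.1 hs
    have h := (hasSum_fin_cons hs' (negBin_pos hq0 hq) (negMultPMF_cons hr ht)).2
    simp only [(hK _).tsum_eq, mul_one] at h
    rw [← h.unique hN]
    exact hs'.hasSum

lemma summable_negMultPMF_mul_coord {k r : ℕ} (hr : 1 ≤ r) {θ : Fin k → ℝ} (hθ : ∀ i, 0 < θ i)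
    (h0 : 0 < 1 - ∑ i, θ i) {f : (Fin k → ℕ) → ℝ}
    (hf : Summable fun x => negMultPMF k r θ x * f x ^ 2) (i : Fin k) :
    Summable fun x => negMultPMF k r θ x * (x i * f x) := by
  have hp0 : ∀ x, 0 ≤ negMultPMF k r θ x := fun x => (negMultPMF_pos hθ h0 x).le
  refine summable_weight_mul hp0 ?_ hf
  -- `xᵢ² ≤ (r + ∑ x) (r + 1 + ∑ x)`, and the latter turns `r` into `r + 2`.
  have h2 := (hasSum_negMultPMF k (r := r + 1 + 1) (by omega) hθ h0).summable.mul_left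
    (r / (1 - ∑ i, θ i) * (((r + 1 : ℕ) : ℝ) / (1 - ∑ i, θ i)))
  refine Summable.of_nonneg_of_le (fun x => mul_nonneg (hp0 x) (sq_nonneg _)) (fun x => ?_) h2
  have hx : (x i : ℝ) ≤ ∑ i, (x i : ℝ) :=
    Finset.single_le_sum (f := fun i => (x i : ℝ)) (fun _ _ => Nat.cast_nonneg _)
      (Finset.mem_univ i)
  have hx0 : (0 : ℝ) ≤ x i := Nat.cast_nonneg _
  have e : r / (1 - ∑ i, θ i) * (((r + 1 : ℕ) : ℝ) / (1 - ∑ i, θ i)) * negMultPMF k (r + 1 + 1) θ x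
      = negMultPMF k r θ x * ((r + ∑ i, (x i : ℝ)) * (((r + 1 : ℕ) : ℝ) + ∑ i, (x i : ℝ))) := by
    rw [mul_assoc, ← negMultPMF_succ_left (by omega) h0, ← mul_assoc, ← mul_assoc,
      ← negMultPMF_succ_left hr h0]
  rw [e, sq]
  refine mul_le_mul_of_nonneg_left ?_ (hp0 x)
  have hr0 : (0 : ℝ) ≤ r := Nat.cast_nonneg _
  push_cast
  exact mul_le_mul (by linarith) (by linarith) hx0 (by positivity)

/-- Square-summability at parameter `r` gives summability at `r + 1`, whose weight is
`θ₀ (r + ∑ xᵢ) / r` times the weight at `r`. -/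
lemma hasSum_negMultPMF_succ_mul {k r : ℕ} (hr : 1 ≤ r) {θ : Fin k → ℝ} (hθ : ∀ i, 0 < θ i)
    (h0 : 0 < 1 - ∑ i, θ i) {f : (Fin k → ℕ) → ℝ}
    (hf : Summable fun x => negMultPMF k r θ x * f x ^ 2) :
    HasSum (fun x => negMultPMF k (r + 1) θ x * f x)
      ((1 - ∑ i, θ i) / r * (r * ∑' x, negMultPMF k r θ x * f x
        + ∑ i, ∑' x, negMultPMF k r θ x * (x i * f x))) := by
  have hp0 : ∀ x, 0 ≤ negMultPMF k r θ x := fun x => (negMultPMF_pos hθ h0 x).le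
  have hf1 := summable_weight_of_sq hp0 (hasSum_negMultPMF k hr hθ h0) hf
  have h := ((hf1.hasSum.mul_left (r : ℝ)).add (hasSum_sum (s := Finset.univ) fun i _ =>
    (summable_negMultPMF_mul_coord hr hθ h0 hf i).hasSum)).mul_left ((1 - ∑ i, θ i) / r)
  refine h.congr_fun fun x => ?_
  have e : negMultPMF k (r + 1) θ x
      = (1 - ∑ i, θ i) / r * (negMultPMF k r θ x * (r + ∑ i, (x i : ℝ))) := by
    rw [negMultPMF_succ_left hr h0]; field_simp
  have e2 : ∑ i, negMultPMF k r θ x * ((x i : ℝ) * f x)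
      = negMultPMF k r θ x * f x * ∑ i, (x i : ℝ) := by
    rw [Finset.mul_sum]; exact Finset.sum_congr rfl fun i _ => by ring
  rw [e, e2]
  ring

/-- Stein's identity in the `i`-th direction: multiplication by `xᵢ` is a shift along `eᵢ`. -/
lemma hasSum_negMultPMF_shift {k r : ℕ} (hr : 1 ≤ r) {θ : Fin k → ℝ} (hθ : ∀ i, 0 < θ i)
    (h0 : 0 < 1 - ∑ i, θ i) {f : (Fin k → ℕ) → ℝ}
    (hf : Summable fun x => negMultPMF k r θ x * f x ^ 2) (i : Fin k) :
    HasSum (fun x => negMultPMF k (r + 1) θ x * f (Function.update x i (x i + 1)))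
      ((1 - ∑ i, θ i) / (r * θ i) * ∑' x, negMultPMF k r θ x * (x i * f x)) := by
  have hinj : Function.Injective fun x : Fin k → ℕ => Function.update x i (x i + 1) := by
    intro x y hxy
    funext j
    have := congrFun hxy j
    by_cases hj : j = i
    · subst hj; simpa using this
    · simpa [hj] using this
  have hs := (summable_negMultPMF_mul_coord hr hθ h0 hf i).hasSum
  rw [← hinj.hasSum_iff] at hs
  · refine (hs.mul_left ((1 - ∑ i, θ i) / (r * θ i))).congr_fun fun x => ?_
    have e : negMultPMF k (r + 1) θ x
        = (1 - ∑ i, θ i) / r * (negMultPMF k r θ x * (r + ∑ i, (x i : ℝ))) := by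
      rw [negMultPMF_succ_left hr h0]; field_simp
    have e2 := negMultPMF_succ_right hr (θ := θ) i x
    have := hθ i
    have e3 : negMultPMF k r θ x * (r + ∑ i, (x i : ℝ)) =
      negMultPMF k r θ (Function.update x i (x i + 1)) * ((x i : ℝ) + 1) / θ i := by
      rw [e2]; field_simp
    rw [e, e3]
    simp only [Function.comp, Function.update_self]
    push_cast
    field_simp
  · intro x hx
    have : x i = 0 := by
      by_contra hne
      refine hx ⟨Function.update x i (x i - 1), ?_⟩
      simp [Nat.sub_add_cancel (Nat.one_le_iff_ne_zero.2 hne)]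
    simp [this]

/-- Raising the first parameter changes the mean of `f` by the mean of its weighted gradient. -/
lemma hasSum_negMultPMF_grad {k r : ℕ} (hr : 1 ≤ r) {θ : Fin k → ℝ} (hθ : ∀ i, 0 < θ i)
    (h0 : 0 < 1 - ∑ i, θ i) {f : (Fin k → ℕ) → ℝ}
    (hf : Summable fun x => negMultPMF k r θ x * f x ^ 2) :
    HasSum (fun x => negMultPMF k (r + 1) θ x * ∑ i, θ i * fd f i x)
      ((1 - ∑ i, θ i) *
        (∑' x, negMultPMF k (r + 1) θ x * f x - ∑' x, negMultPMF k r θ x * f x)) := by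
  have hS := hasSum_negMultPMF_succ_mul hr hθ h0 hf
  have h := hasSum_sum (s := Finset.univ) fun i _ =>
    ((hasSum_negMultPMF_shift hr hθ h0 hf i).sub hS.summable.hasSum).mul_left (θ i)
  have e : ∑ i, θ i * ((1 - ∑ i, θ i) / (r * θ i) * ∑' x, negMultPMF k r θ x * (x i * f x)
        - ∑' x, negMultPMF k (r + 1) θ x * f x)
      = (1 - ∑ i, θ i) *
        (∑' x, negMultPMF k (r + 1) θ x * f x - ∑' x, negMultPMF k r θ x * f x) := by
    have e1 : ∀ i, θ i * ((1 - ∑ i, θ i) / (r * θ i) * ∑' x, negMultPMF k r θ x * (x i * f x)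
        - ∑' x, negMultPMF k (r + 1) θ x * f x)
        = (1 - ∑ i, θ i) / r * ∑' x, negMultPMF k r θ x * (x i * f x)
          - θ i * ∑' x, negMultPMF k (r + 1) θ x * f x := fun i => by
      have := hθ i
      field_simp
    simp only [e1]
    rw [Finset.sum_sub_distrib, ← Finset.mul_sum, ← Finset.sum_mul]
    have e2 := hS.tsum_eq
    have hr0 : (r : ℝ) ≠ 0 := by positivity
    have e3 : (1 - ∑ i, θ i) / r * ∑ i, ∑' x, negMultPMF k r θ x * (x i * f x)
        = ∑' x, negMultPMF k (r + 1) θ x * f x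
          - (1 - ∑ i, θ i) * ∑' x, negMultPMF k r θ x * f x := by
      rw [e2]; field_simp; ring
    rw [e3]; ring
  rw [← e]
  refine h.congr_fun fun x => ?_
  rw [Finset.mul_sum]
  exact Finset.sum_congr rfl fun i _ => by rw [fd]; ring

/-! ### The Dirichlet form and the induction on the dimension -/

/-- The quadratic form `θ₀ ∑ θᵢ vᵢ² + (∑ θᵢ vᵢ)²`, which is `θ₀² / r` times `vᵀ Σ v`. -/
def gradForm {k : ℕ} (θ v : Fin k → ℝ) : ℝ :=
  (1 - ∑ i, θ i) * ∑ i, θ i * v i ^ 2 + (∑ i, θ i * v i) ^ 2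

lemma quadForm_negMultSigma {k r : ℕ} {θ : Fin k → ℝ} (v : Fin k → ℝ) :
    quadForm (negMultSigma k r θ) v = r / (1 - ∑ i, θ i) ^ 2 * gradForm θ v := by
  have hS : ∀ i j, v i * negMultSigma k r θ i j * v j
      = r / (1 - ∑ i, θ i) ^ 2 * ((θ i * v i) * (θ j * v j))
        + if i = j then r / (1 - ∑ i, θ i) ^ 2 * ((1 - ∑ i, θ i) * (θ i * v i ^ 2)) else 0 := by
    intro i j
    unfold negMultSigma
    split_ifs with h
    · subst h; ring
    · ring
  simp only [quadForm, hS, Finset.sum_add_distrib, ← Finset.mul_sum, Finset.sum_ite_eq,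
    Finset.mem_univ, if_true, ← Finset.sum_mul, gradForm]
  ring

lemma gradForm_nonneg {k : ℕ} {θ : Fin k → ℝ} (hθ : ∀ i, 0 < θ i) (h0 : 0 < 1 - ∑ i, θ i)
    (v : Fin k → ℝ) : 0 ≤ gradForm θ v :=
  add_nonneg (mul_nonneg h0.le (Finset.sum_nonneg fun i _ =>
    mul_nonneg (hθ i).le (sq_nonneg _))) (sq_nonneg _)

/-- Completing the square in the first coordinate: `gradForm` splits into the form of the remaining
coordinates and the square of the derivative of the conditional mean. -/
lemma gradForm_succ {k : ℕ} {θ : Fin (k + 1) → ℝ} (hθ : ∀ i, 0 < θ i) (h0 : 0 < 1 - ∑ i, θ i)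
    (v : Fin (k + 1) → ℝ) :
    gradForm θ v = (1 - ∑ i, θ i) / (1 - ∑ i, Fin.tail θ i) * gradForm (Fin.tail θ) (Fin.tail v)
      + θ 0 * (1 - ∑ i, Fin.tail θ i) *
        (v 0 + (∑ i, Fin.tail θ i * Fin.tail v i) / (1 - ∑ i, Fin.tail θ i)) ^ 2 := by
  have ht := one_sub_sum_tail_pos hθ h0
  have hs : 1 - ∑ i, θ i = (1 - ∑ i, Fin.tail θ i) - θ 0 := by
    rw [Fin.sum_univ_succ]; simp only [Fin.tail]; ring
  unfold gradForm
  rw [hs, Fin.sum_univ_succ (fun i => θ i * v i ^ 2), Fin.sum_univ_succ (fun i => θ i * v i)]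
  change ((1 - ∑ i, Fin.tail θ i) - θ 0) * (θ 0 * v 0 ^ 2 +
    ∑ i, Fin.tail θ i * Fin.tail v i ^ 2) + (θ 0 * v 0 + ∑ i, Fin.tail θ i * Fin.tail v i) ^ 2 = _
  set t := 1 - ∑ i, Fin.tail θ i
  field_simp
  ring

lemma fd_zero_cons {k : ℕ} (g : (Fin (k + 1) → ℕ) → ℝ) (m : ℕ) (x : Fin k → ℕ) :
    fd g 0 (Fin.cons m x) = g (Fin.cons (m + 1) x) - g (Fin.cons m x) := by
  rw [fd, Fin.cons_zero, Fin.update_cons_zero]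

lemma fd_succ_cons {k : ℕ} (g : (Fin (k + 1) → ℕ) → ℝ) (i : Fin k) (m : ℕ) (x : Fin k → ℕ) :
    fd g i.succ (Fin.cons m x) = fd (fun y => g (Fin.cons m y)) i x := by
  rw [fd, fd, Fin.cons_succ, ← Fin.cons_update]

lemma fd_affine {k : ℕ} {g : (Fin k → ℕ) → ℝ} {c : ℝ} {ρ : Fin k → ℝ}
    (hg : ∀ x, g x = c + ∑ i, ρ i * (x i : ℝ)) (i : Fin k) (x : Fin k → ℕ) : fd g i x = ρ i := by
  rw [fd, hg, hg, ← Finset.add_sum_erase _ _ (Finset.mem_univ i),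
    ← Finset.add_sum_erase _ (fun j => ρ j * (x j : ℝ)) (Finset.mem_univ i), Function.update_self,
    Finset.sum_congr rfl fun j hj => by rw [Function.update_of_ne (Finset.ne_of_mem_erase hj)]]
  push_cast
  ring

/-- The gluing step of the equality case: slices affine with coefficients `b m`, `ρ m`, whose
derivative of the conditional mean does not depend on the slice or on the point, glue to an affine
function. -/
lemma exists_affine_of_slices {k : ℕ} {g : (Fin (k + 1) → ℕ) → ℝ} {b : ℕ → ℝ} {ρ : ℕ → Fin k → ℝ}
    (hg : ∀ m x, g (Fin.cons m x) = b m + ∑ i, ρ m i * (x i : ℝ)) {θ : Fin k → ℝ} {t c : ℝ}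
    (hc : ∀ (m : ℕ) (x : Fin k → ℕ), fd g 0 (Fin.cons m x) +
      (∑ i, θ i * fd (fun y => g (Fin.cons m y)) i x) / t = c) :
    ∃ (ρ0 : ℝ) (ρ' : Fin (k + 1) → ℝ), ∀ z, g z = ρ0 + ∑ i, ρ' i * (z i : ℝ) := by
  have hu : ∀ (m : ℕ) (x : Fin k → ℕ), b (m + 1) - b m + ∑ i, (ρ (m + 1) i - ρ m i) * (x i : ℝ)
      + (∑ i, θ i * ρ m i) / t = c := by
    intro m x
    rw [← hc m x, fd_zero_cons, hg, hg]
    simp only [fd_affine (hg m), sub_mul, Finset.sum_sub_distrib]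
    ring
  have h0 : ∀ m, b (m + 1) - b m + (∑ i, θ i * ρ m i) / t = c := fun m => by
    simpa using hu m 0
  have hρ : ∀ m i, ρ (m + 1) i = ρ m i := by
    intro m i
    have h1 := hu m (Pi.single i 1)
    have e : ∑ j, (ρ (m + 1) j - ρ m j) * ((Pi.single i 1 : Fin k → ℕ) j : ℝ)
        = ρ (m + 1) i - ρ m i := by
      rw [Finset.sum_eq_single i]
      · simp
      · intro j _ hj; simp [hj]
      · simp
    rw [e] at h1
    linarith [h0 m]
  have hρ0 : ∀ m, ρ m = ρ 0 := by
    intro m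
    induction m with
    | zero => rfl
    | succ n ih => rw [← ih]; exact funext (hρ n)
  have hb : ∀ m : ℕ, b m = b 0 + (c - (∑ i, θ i * ρ 0 i) / t) * m := by
    intro m
    induction m with
    | zero => simp
    | succ n ih =>
      have := h0 n
      rw [hρ0 n] at this
      push_cast
      linarith
  refine ⟨b 0, Fin.cons (c - (∑ i, θ i * ρ 0 i) / t) (ρ 0), fun z => ?_⟩
  rw [← Fin.cons_self_tail z, hg, hb (z 0), hρ0 (z 0), Fin.sum_univ_succ]
  simp only [Fin.cons_zero, Fin.cons_succ]
  ring

/-- The variance bound with the "only if" half of its equality case, by induction on the dimension: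
condition on the first coordinate, apply the induction hypothesis to each slice and
`negBin_variance_bound` to the conditional mean. -/
lemma negMult_variance_bound (k : ℕ) : ∀ {r : ℕ}, 1 ≤ r → ∀ {θ : Fin k → ℝ}, (∀ i, 0 < θ i) →
    0 < 1 - ∑ i, θ i → ∀ {g : (Fin k → ℕ) → ℝ},
    (Summable fun x => negMultPMF k r θ x * g x ^ 2) →
    (Summable fun x => negMultPMF k (r + 1) θ x * gradForm θ (fun i => fd g i x)) →
    ∑' x, negMultPMF k r θ x * g x ^ 2 - (∑' x, negMultPMF k r θ x * g x) ^ 2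
      ≤ r / (1 - ∑ i, θ i) ^ 2 *
        ∑' x, negMultPMF k (r + 1) θ x * gradForm θ (fun i => fd g i x) ∧
    (∑' x, negMultPMF k r θ x * g x ^ 2 - (∑' x, negMultPMF k r θ x * g x) ^ 2
      = r / (1 - ∑ i, θ i) ^ 2 *
        ∑' x, negMultPMF k (r + 1) θ x * gradForm θ (fun i => fd g i x) →
      ∃ (ρ0 : ℝ) (ρ : Fin k → ℝ), ∀ x, g x = ρ0 + ∑ i, ρ i * (x i : ℝ)) := by
  induction k with
  | zero =>
    intro r hr θ hθ h0 g hg2 hgd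
    have hp := (hasSum_negMultPMF 0 hr hθ h0).tsum_eq
    have hg : ∀ x, g x = g 0 := fun x => by rw [Subsingleton.elim x 0]
    refine ⟨?_, fun _ => ⟨g 0, 0, fun x => by simpa using hg x⟩⟩
    have e1 : ∑' x, negMultPMF 0 r θ x * g x ^ 2 = g 0 ^ 2 := by
      simp only [hg, tsum_mul_right]; rw [hp, one_mul]
    have e2 : ∑' x, negMultPMF 0 r θ x * g x = g 0 := by
      simp only [hg, tsum_mul_right]; rw [hp, one_mul]
    rw [e1, e2]
    simp [gradForm]
  | succ k ih =>
    intro r hr θ hθ h0 g hg2 hgd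
    have ht := one_sub_sum_tail_pos hθ h0
    have hθ' : ∀ i, 0 < Fin.tail θ i := fun i => hθ i.succ
    have hq1 := head_div_lt_one hθ h0
    have hq0 : 0 < θ 0 / (1 - ∑ i, Fin.tail θ i) := div_pos (hθ 0) ht
    have hs : 1 - ∑ i, θ i = (1 - ∑ i, Fin.tail θ i) - θ 0 := by
      rw [Fin.sum_univ_succ]; simp only [Fin.tail]; ring
    have hcons := negMultPMF_cons (θ := θ) hr ht
    have hcons1 := negMultPMF_cons (r := r + 1) (θ := θ) (by omega) ht
    have hA : 1 - θ 0 / (1 - ∑ i, Fin.tail θ i)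
        = (1 - ∑ i, θ i) / (1 - ∑ i, Fin.tail θ i) := by
      rw [hs]; field_simp
    have hgsucc := fun v => gradForm_succ hθ h0 v
    set t := 1 - ∑ i, Fin.tail θ i with ht_def
    set q := θ 0 / t with hq_def
    set s := 1 - ∑ i, θ i with hs_def
    have hst : 0 < s / t := div_pos h0 ht
    have ha := hθ 0
    have hr0 : (0 : ℝ) < r := by exact_mod_cast hr
    have hn := negBin_pos (r := r) hq0 hq1
    have hn1 := negBin_pos (r := r + 1) hq0 hq1
    have hK : ∀ m, HasSum (negMultPMF k (r + m) (Fin.tail θ)) 1 := fun m =>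
      hasSum_negMultPMF k (by omega) hθ' ht
    have hK1 : ∀ m, HasSum (negMultPMF k (r + 1 + m) (Fin.tail θ)) 1 := fun m =>
      hasSum_negMultPMF k (by omega) hθ' ht
    have hKp : ∀ m x, 0 < negMultPMF k (r + m) (Fin.tail θ) x := fun m => negMultPMF_pos hθ' ht
    have hK1p : ∀ m x, 0 < negMultPMF k (r + 1 + m) (Fin.tail θ) x := fun m =>
      negMultPMF_pos hθ' ht
    have hpp : ∀ x, 0 ≤ negMultPMF (k + 1) r θ x := fun x => (negMultPMF_pos hθ h0 x).le
    have hpp1 : ∀ x, 0 ≤ negMultPMF (k + 1) (r + 1) θ x := fun x => (negMultPMF_pos hθ h0 x).le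
    have hg1 := summable_weight_of_sq hpp (hasSum_negMultPMF (k + 1) hr hθ h0) hg2
    -- The two halves of the gradient form: `V` for the slice, `u` for the conditional mean.
    set V : ℕ → (Fin k → ℕ) → ℝ := fun m x =>
      gradForm (Fin.tail θ) (fun i => fd (fun y => g (Fin.cons m y)) i x) with hV
    set u : ℕ → (Fin k → ℕ) → ℝ := fun m x => fd g 0 (Fin.cons m x) +
      (∑ i, Fin.tail θ i * fd (fun y => g (Fin.cons m y)) i x) / t with hu
    have hV0 : ∀ m x, 0 ≤ V m x := fun m x => gradForm_nonneg hθ' ht _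
    have hsplit : ∀ m x, gradForm θ (fun i => fd g i (Fin.cons m x))
        = s / t * V m x + θ 0 * t * u m x ^ 2 := by
      intro m x
      have e : Fin.tail (fun i => fd g i (Fin.cons m x))
          = fun i => fd (fun y => g (Fin.cons m y)) i x :=
        funext fun i => fd_succ_cons g i m x
      rw [hgsucc, e]
    -- Slicing `E g`, `E g²` and the two halves of the Dirichlet form.
    obtain ⟨hg2s, hg2h⟩ := hasSum_fin_cons hg2 hn
      (f := fun m x => negMultPMF k (r + m) (Fin.tail θ) x * g (Fin.cons m x) ^ 2)
      (fun m x => by rw [hcons]; ring)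
    obtain ⟨hg1s, hg1h⟩ := hasSum_fin_cons hg1 hn
      (f := fun m x => negMultPMF k (r + m) (Fin.tail θ) x * g (Fin.cons m x))
      (fun m x => by rw [hcons]; ring)
    have hVsum : Summable fun z : Fin (k + 1) → ℕ =>
        negMultPMF (k + 1) (r + 1) θ z * V (z 0) (Fin.tail z) := by
      refine Summable.of_nonneg_of_le (fun z => mul_nonneg (hpp1 z) (hV0 _ _)) (fun z => ?_)
        (hgd.mul_left (t / s))
      have e := hsplit (z 0) (Fin.tail z)
      rw [Fin.cons_self_tail] at e
      rw [e]
      have e2 : t / s * (negMultPMF (k + 1) (r + 1) θ z *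
          (s / t * V (z 0) (Fin.tail z) + θ 0 * t * u (z 0) (Fin.tail z) ^ 2))
          = negMultPMF (k + 1) (r + 1) θ z * V (z 0) (Fin.tail z)
          + negMultPMF (k + 1) (r + 1) θ z * (t / s * (θ 0 * t) * u (z 0) (Fin.tail z) ^ 2) := by
        field_simp
      rw [e2]
      have := mul_nonneg (hpp1 z)
        (by positivity : 0 ≤ t / s * (θ 0 * t) * u (z 0) (Fin.tail z) ^ 2)
      linarith
    have husum : Summable fun z : Fin (k + 1) → ℕ =>
        negMultPMF (k + 1) (r + 1) θ z * u (z 0) (Fin.tail z) ^ 2 := by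
      refine ((hgd.sub (hVsum.mul_left (s / t))).mul_left (1 / (θ 0 * t))).congr fun z => ?_
      have e := hsplit (z 0) (Fin.tail z)
      rw [Fin.cons_self_tail] at e
      rw [e]
      field_simp
      ring
    obtain ⟨hVs, hVh⟩ := hasSum_fin_cons hVsum hn1
      (f := fun m x => negMultPMF k (r + 1 + m) (Fin.tail θ) x * V m x)
      (fun m x => by rw [hcons1, Fin.cons_zero, Fin.tail_cons]; ring)
    obtain ⟨hus, huh⟩ := hasSum_fin_cons husum hn1
      (f := fun m x => negMultPMF k (r + 1 + m) (Fin.tail θ) x * u m x ^ 2)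
      (fun m x => by rw [hcons1, Fin.cons_zero, Fin.tail_cons]; ring)
    have hD : ∑' z, negMultPMF (k + 1) (r + 1) θ z * gradForm θ (fun i => fd g i z)
        = s / t * ∑' z, negMultPMF (k + 1) (r + 1) θ z * V (z 0) (Fin.tail z)
        + θ 0 * t * ∑' z, negMultPMF (k + 1) (r + 1) θ z * u (z 0) (Fin.tail z) ^ 2 := by
      rw [← tsum_mul_left, ← tsum_mul_left, ← (hVsum.mul_left _).tsum_add (husum.mul_left _)]
      refine tsum_congr fun z => ?_
      have e := hsplit (z 0) (Fin.tail z)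
      rw [Fin.cons_self_tail] at e
      rw [e]
      ring
    set EV := ∑' z, negMultPMF (k + 1) (r + 1) θ z * V (z 0) (Fin.tail z)
    set Eu := ∑' z, negMultPMF (k + 1) (r + 1) θ z * u (z 0) (Fin.tail z) ^ 2
    -- `h m` is the conditional mean and `W m` the conditional second moment.
    set h : ℕ → ℝ := fun m => ∑' x, negMultPMF k (r + m) (Fin.tail θ) x * g (Fin.cons m x) with hh
    set W : ℕ → ℝ := fun m => ∑' x, negMultPMF k (r + m) (Fin.tail θ) x * g (Fin.cons m x) ^ 2
      with hW
    have hhW : ∀ m, h m ^ 2 ≤ W m := fun m =>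
      sq_tsum_weight_le (fun x => (hKp m x).le) (hK m) (hg2s m)
    have hh2 : Summable fun m => negBin r q m * h m ^ 2 :=
      Summable.of_nonneg_of_le (fun m => mul_nonneg (hn m).le (sq_nonneg _))
        (fun m => mul_le_mul_of_nonneg_left (hhW m) (hn m).le) hg2h.summable
    have hincr : ∀ m, h (m + 1) - h m = ∑' x, negMultPMF k (r + 1 + m) (Fin.tail θ) x * u m x := by
      intro m
      have hidx : r + 1 + m = r + m + 1 := by omega
      have g1 := hasSum_negMultPMF_succ_mul (r := r + m) (by omega) hθ' ht (hg2s m)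
      have g2 := hasSum_negMultPMF_grad (r := r + m) (by omega) hθ' ht (hg2s m)
      have g3 : HasSum (fun x => negMultPMF k (r + m + 1) (Fin.tail θ) x * g (Fin.cons (m + 1) x))
        (h (m + 1)) := (hg1s (m + 1)).hasSum
      have g4 := (g3.sub g1.summable.hasSum).add (g2.mul_left (1 / t))
      rw [hidx]
      have e : h (m + 1) - h m = h (m + 1)
          - ∑' x, negMultPMF k (r + m + 1) (Fin.tail θ) x * g (Fin.cons m x)
          + 1 / t * (t * (∑' x, negMultPMF k (r + m + 1) (Fin.tail θ) x * g (Fin.cons m x)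
            - ∑' x, negMultPMF k (r + m) (Fin.tail θ) x * g (Fin.cons m x))) := by
        field_simp
        simp only [hh]
        ring
      rw [e]
      refine ((g4.congr_fun fun x => ?_).tsum_eq).symm
      simp only [hu, fd_zero_cons]
      ring
    have hjen : ∀ m, (h (m + 1) - h m) ^ 2
        ≤ ∑' x, negMultPMF k (r + 1 + m) (Fin.tail θ) x * u m x ^ 2 := fun m => by
      rw [hincr]
      exact sq_tsum_weight_le (fun x => (hK1p m x).le) (hK1 m) (hus m)
    have hjen' : ∀ m, negBin (r + 1) q m * (h (m + 1) - h m) ^ 2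
        ≤ negBin (r + 1) q m * ∑' x, negMultPMF k (r + 1 + m) (Fin.tail θ) x * u m x ^ 2 :=
      fun m => mul_le_mul_of_nonneg_left (hjen m) (hn1 m).le
    have hdh : Summable fun m => negBin (r + 1) q m * (h (m + 1) - h m) ^ 2 :=
      Summable.of_nonneg_of_le (fun m => mul_nonneg (hn1 m).le (sq_nonneg _)) hjen' huh.summable
    have hdEu := hdh.tsum_le_tsum hjen' huh.summable
    rw [huh.tsum_eq] at hdEu
    obtain ⟨hone, honeEq⟩ := negBin_variance_bound hr hq0 hq1 hh2 hdh
    -- The induction hypothesis on the slices, summed against the law of the first coordinate.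
    have hidx : ∀ m, r + 1 + m = r + m + 1 := fun m => by omega
    have hih := fun m => ih (r := r + m) (by omega) hθ' ht (hg2s m)
      (by rw [← hidx]; exact hVs m)
    have hslice : ∀ m, negBin r q m * (W m - h m ^ 2)
        ≤ r / (s * t) * (negBin (r + 1) q m *
          ∑' x, negMultPMF k (r + 1 + m) (Fin.tail θ) x * V m x) ∧
        (negBin r q m * (W m - h m ^ 2)
        = r / (s * t) * (negBin (r + 1) q m *
          ∑' x, negMultPMF k (r + 1 + m) (Fin.tail θ) x * V m x) →
          ∃ (c : ℝ) (ρ : Fin k → ℝ), ∀ x, g (Fin.cons m x) = c + ∑ i, ρ i * (x i : ℝ)) := by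
      intro m
      obtain ⟨i1, i2⟩ := hih m
      rw [← ht_def, ← hidx] at i1 i2
      have e : r / (s * t) * (negBin (r + 1) q m *
          ∑' x, negMultPMF k (r + 1 + m) (Fin.tail θ) x * V m x)
          = negBin r q m * (((r + m : ℕ) : ℝ) / t ^ 2 *
            ∑' x, negMultPMF k (r + 1 + m) (Fin.tail θ) x * V m x) := by
        have e1 := negBin_succ_left hr hq1 m
        rw [hA] at e1
        have e2 : negBin r q m * (((r + m : ℕ) : ℝ) / t ^ 2 *
            ∑' x, negMultPMF k (r + 1 + m) (Fin.tail θ) x * V m x)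
            = negBin r q m * (r + m) * ((1 / t ^ 2) *
              ∑' x, negMultPMF k (r + 1 + m) (Fin.tail θ) x * V m x) := by
          push_cast; ring
        rw [e2, e1]
        field_simp
      rw [e]
      exact ⟨mul_le_mul_of_nonneg_left i1 (hn m).le,
        fun heq => i2 (mul_left_cancel₀ (hn m).ne' heq)⟩
    have hWh : HasSum (fun m => negBin r q m * (W m - h m ^ 2))
        (∑' z, negMultPMF (k + 1) r θ z * g z ^ 2 - ∑' m, negBin r q m * h m ^ 2) :=
      (hg2h.sub hh2.hasSum).congr_fun fun m => by ring
    have hVm := hVh.mul_left (r / (s * t))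
    have hsl := hasSum_le (fun m => (hslice m).1) hWh hVm
    have hmean : ∑' z, negMultPMF (k + 1) r θ z * g z = ∑' m, negBin r q m * h m :=
      hg1h.tsum_eq.symm
    have hcoef : r * q / (1 - q) ^ 2 = r * θ 0 * t / s ^ 2 := by
      rw [hA, hq_def]; field_simp
    have hRHS : r / s ^ 2 * (s / t * EV + θ 0 * t * Eu)
        = r / (s * t) * EV + r * θ 0 * t / s ^ 2 * Eu := by field_simp
    have hcpos : 0 < r * θ 0 * t / s ^ 2 := by positivity
    rw [hcoef] at hone honeEq
    have hmul := mul_le_mul_of_nonneg_left hdEu hcpos.le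
    rw [hD, hmean, hRHS]
    refine ⟨by linarith, fun heq => ?_⟩
    have q1 := eq_of_tsum_eq_of_le hWh.summable hVm.summable (fun m => (hslice m).1)
      (by rw [hWh.tsum_eq, hVm.tsum_eq]; linarith)
    have q2 := honeEq (by linarith)
    have q3 := eq_of_tsum_eq_of_le hdh huh.summable hjen' (by
      rw [huh.tsum_eq]
      exact mul_left_cancel₀ hcpos.ne' (by linarith))
    choose b ρ hbρ using fun m => (hslice m).2 (q1 m)
    refine exists_affine_of_slices hbρ (θ := Fin.tail θ) (t := t) (c := h 1 - h 0) fun m x => ?_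
    have q4 := mul_left_cancel₀ (hn1 m).ne' (q3 m)
    rw [hincr] at q4
    have q5 := eq_tsum_of_sq_tsum_weight_eq (hK1p m) (hK1 m) (hus m) q4 x
    rw [← hincr, q2] at q5
    exact q5

/-- For an affine function the bound is an equality: expand one factor of the variance into
coordinates and apply Stein's identity to each. -/
lemma negMult_variance_affine {k r : ℕ} (hr : 1 ≤ r) {θ : Fin k → ℝ} (hθ : ∀ i, 0 < θ i)
    (h0 : 0 < 1 - ∑ i, θ i) {g : (Fin k → ℕ) → ℝ}
    (hg2 : Summable fun x => negMultPMF k r θ x * g x ^ 2) {c : ℝ} {ρ : Fin k → ℝ}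
    (hg : ∀ x, g x = c + ∑ i, ρ i * (x i : ℝ)) :
    ∑' x, negMultPMF k r θ x * g x ^ 2 - (∑' x, negMultPMF k r θ x * g x) ^ 2
      = r / (1 - ∑ i, θ i) ^ 2 * gradForm θ ρ := by
  have hp := hasSum_negMultPMF k hr hθ h0
  have hp1 := hasSum_negMultPMF k (r := r + 1) (by omega) hθ h0
  have hpp : ∀ x, 0 ≤ negMultPMF k r θ x := fun x => (negMultPMF_pos hθ h0 x).le
  have hr0 : (0 : ℝ) < r := by exact_mod_cast hr
  have hg1 := summable_weight_of_sq hpp hp hg2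
  set μ := ∑' x, negMultPMF k r θ x * g x with hμ
  have hS := hasSum_negMultPMF_succ_mul hr hθ h0 hg2
  set M := ∑' x, negMultPMF k (r + 1) θ x * g x with hM
  have hgrad := hasSum_negMultPMF_grad hr hθ h0 hg2
  simp only [fd_affine hg] at hgrad
  have hdiff : ∑ i, θ i * ρ i = (1 - ∑ i, θ i) * (M - μ) := by
    have := (hp1.mul_right (∑ i, θ i * ρ i)).unique hgrad
    rwa [one_mul] at this
  have hone : Summable fun x => negMultPMF k r θ x * (1 : ℝ) ^ 2 := by simpa using hp.summable
  -- Each coordinate contributes `E xᵢ (g - μ) = (r θᵢ / θ₀) (ρᵢ + M - μ)`.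
  have hcoord : ∀ i, HasSum (fun x => negMultPMF k r θ x * ((x i : ℝ) * (g x - μ)))
      (r * θ i / (1 - ∑ i, θ i) * (ρ i + M - μ)) := by
    intro i
    have hi := hθ i
    have a1 := summable_negMultPMF_mul_coord hr hθ h0 hg2 i
    have a2 := summable_negMultPMF_mul_coord hr hθ h0 hone i
    have b1 := hasSum_negMultPMF_shift hr hθ h0 hg2 i
    have b2 := (hasSum_negMultPMF_shift hr hθ h0 hone i).unique (by simpa using hp1)
    have b3 : HasSum (fun x => negMultPMF k (r + 1) θ x * g (Function.update x i (x i + 1)))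
        (M + ρ i) := by
      have := hS.summable.hasSum.add (hp1.mul_right (ρ i))
      rw [one_mul] at this
      refine this.congr_fun fun x => ?_
      have e := fd_affine hg i x
      rw [fd] at e
      rw [← e]; ring
    have b4 := b1.unique b3
    have e : r * θ i / (1 - ∑ i, θ i) * (ρ i + M - μ)
        = ∑' x, negMultPMF k r θ x * (x i * g x)
          - μ * ∑' x, negMultPMF k r θ x * (x i * (1 : ℝ)) := by
      have f1 : ∑' x, negMultPMF k r θ x * (x i * g x)
          = r * θ i / (1 - ∑ i, θ i) * (M + ρ i) := by rw [← b4]; field_simp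
      have f2 : ∑' x, negMultPMF k r θ x * (x i * (1 : ℝ)) = r * θ i / (1 - ∑ i, θ i) := by
        have f3 : ∀ T : ℝ, T = r * θ i / (1 - ∑ i, θ i) * ((1 - ∑ i, θ i) / (r * θ i) * T) :=
          fun T => by field_simp
        rw [f3 (∑' x, negMultPMF k r θ x * (x i * (1 : ℝ))), b2, mul_one]
      rw [f1, f2]; ring
    rw [e]
    exact (a1.hasSum.sub (a2.hasSum.mul_left μ)).congr_fun fun x => by ring
  have hvar := hasSum_weight_sub_sq hp hg1 hg2 μ
  have hcent : HasSum (fun x => negMultPMF k r θ x * (g x - μ)) 0 := by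
    have := hg1.hasSum.sub (hp.mul_right μ)
    rw [one_mul, ← hμ, sub_self] at this
    exact this.congr_fun fun x => by ring
  have hexp := (hcent.mul_left (c - μ)).add
    (hasSum_sum (s := Finset.univ) fun i _ => (hcoord i).mul_left (ρ i))
  have hexp' := hexp.congr_fun (g := fun x => negMultPMF k r θ x * (g x - μ) ^ 2) fun x => by
    have : ∑ i, ρ i * (negMultPMF k r θ x * ((x i : ℝ) * (g x - μ)))
        = negMultPMF k r θ x * (g x - μ) * ∑ i, ρ i * (x i : ℝ) := by
      rw [Finset.mul_sum]; exact Finset.sum_congr rfl fun i _ => by ring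
    rw [this]
    have := hg x
    have e : ∑ i, ρ i * (x i : ℝ) = g x - c := by rw [this]; ring
    rw [e]; ring
  have hfin := hvar.unique hexp'
  have e : ∑ i, ρ i * (r * θ i / (1 - ∑ i, θ i) * (ρ i + M - μ))
      = r / (1 - ∑ i, θ i) * (∑ i, θ i * ρ i ^ 2) +
        r / (1 - ∑ i, θ i) * (M - μ) * (∑ i, θ i * ρ i) := by
    rw [Finset.mul_sum, Finset.mul_sum, ← Finset.sum_add_distrib]
    exact Finset.sum_congr rfl fun i _ => by ring
  rw [e] at hfin
  have hl : ∑' x, negMultPMF k r θ x * g x ^ 2 - μ ^ 2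
      = ∑' x, negMultPMF k r θ x * g x ^ 2 - 2 * μ * μ + μ ^ 2 := by ring
  rw [hl, hfin, gradForm, hdiff]
  field_simp
  ring

/-- Equality case of the negative multinomial Chernoff-type variance bound:
assuming `E[w(X) ∇g(X)ᵀ Σ ∇g(X)] < ∞` and `Var g(X) < ∞`, equality
`Var g(X) = E[w(X) ∇g(X)ᵀ Σ ∇g(X)]` holds iff `g` is linear on `ℕ^k`. -/
theorem negative_multinomial_variance_bound_equality_iff
    (k r : ℕ) (hk : 1 ≤ k) (hr : 1 ≤ r) (θ : Fin k → ℝ)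
    (hθ : ∀ i, 0 < θ i ∧ θ i < 1) (hθ0 : 0 < 1 - ∑ i, θ i)
    (g : (Fin k → ℕ) → ℝ)
    (hRHS : (∑' x : Fin k → ℕ,
        ENNReal.ofReal
          (negMultPMF k r θ x *
            (negMultW k r θ x * quadForm (negMultSigma k r θ) (fun i => fd g i x)))) < ⊤)
    (hVar : (∑' x : Fin k → ℕ,
        ENNReal.ofReal
          (negMultPMF k r θ x * (g x - ∑' y : Fin k → ℕ, negMultPMF k r θ y * g y) ^ 2)) < ⊤) :
    (∑' x : Fin k → ℕ,
        negMultPMF k r θ x * (g x - ∑' y : Fin k → ℕ, negMultPMF k r θ y * g y) ^ 2)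
      = (∑' x : Fin k → ℕ,
          negMultPMF k r θ x *
            (negMultW k r θ x * quadForm (negMultSigma k r θ) (fun i => fd g i x)))
    ↔ ∃ (ρ0 : ℝ) (ρ : Fin k → ℝ), ∀ x : Fin k → ℕ,
        g x = ρ0 + ∑ i, ρ i * (x i : ℝ) := by

  have hθp : ∀ i, 0 < θ i := fun i => (hθ i).1
  have hp0 : ∀ x, 0 ≤ negMultPMF k r θ x := fun x => (negMultPMF_pos hθp hθ0 x).le
  have hp := hasSum_negMultPMF k hr hθp hθ0
  have hp1 := hasSum_negMultPMF k (r := r + 1) (by omega) hθp hθ0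
  have hr0 : (0 : ℝ) < r := by exact_mod_cast hr
  -- Multiplication by `w` turns the weight of parameter `r` into that of parameter `r + 1`.
  have hterm : ∀ x, negMultPMF k r θ x *
      (negMultW k r θ x * quadForm (negMultSigma k r θ) (fun i => fd g i x))
      = r / (1 - ∑ i, θ i) ^ 2 *
        (negMultPMF k (r + 1) θ x * gradForm θ (fun i => fd g i x)) := by
    intro x
    have e : negMultPMF k r θ x * negMultW k r θ x = negMultPMF k (r + 1) θ x := by
      have e1 := negMultPMF_succ_left hr hθ0 x
      have e2 : negMultPMF k r θ x * negMultW k r θ x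
          = (1 - ∑ i, θ i) / r * (negMultPMF k r θ x * (r + ∑ i, (x i : ℝ))) := by
        rw [negMultW]; ring
      rw [e2, e1]; field_simp
    rw [← mul_assoc, e, quadForm_negMultSigma]
    ring
  have hcpos : 0 < r / (1 - ∑ i, θ i) ^ 2 := by positivity
  have hgd : Summable fun x => negMultPMF k (r + 1) θ x * gradForm θ (fun i => fd g i x) := by
    have := summable_of_tsum_ofReal_lt_top (fun x => by
      rw [hterm]
      exact mul_nonneg hcpos.le (mul_nonneg (negMultPMF_pos hθp hθ0 x).le
        (gradForm_nonneg hθp hθ0 _))) hRHS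
    simp only [hterm] at this
    exact (summable_mul_left_iff hcpos.ne').1 this
  have hg2 : Summable fun x => negMultPMF k r θ x * g x ^ 2 := by
    set μ := ∑' y : Fin k → ℕ, negMultPMF k r θ y * g y
    have h2 := summable_of_tsum_ofReal_lt_top
      (fun x => mul_nonneg (hp0 x) (sq_nonneg _)) hVar
    refine Summable.of_nonneg_of_le (fun x => mul_nonneg (hp0 x) (sq_nonneg _)) (fun x => ?_)
      ((h2.mul_left 2).add (hp.summable.mul_left (2 * μ ^ 2)))
    nlinarith [mul_nonneg (hp0 x) (sq_nonneg (g x - 2 * μ))]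
  have hg1 := summable_weight_of_sq hp0 hp hg2
  rw [tsum_weight_variance hp hg1 hg2]
  simp only [hterm, tsum_mul_left]
  refine ⟨(negMult_variance_bound k hr hθp hθ0 hg2 hgd).2, ?_⟩
  rintro ⟨c, ρ, hg⟩
  rw [negMult_variance_affine hr hθp hθ0 hg2 hg]
  simp only [fd_affine hg, tsum_mul_right, hp1.tsum_eq, one_mul]
end

section
/- Let X = (X_1,…,X_k) follow the multinomial distribution M_k(n,π) with dispersion matrix Σ = (σ_{ij}), and let g : ℕ^k → ℝ. Then Cov( Σ_{i=1}^k X_i , g(X) ) = E[ w(X) · Σ_{i=1}^k c_i Δ_i g(X) ], where c_i := Σ_{j=1}^k σ_{ij} and w is the multinomial w-function. -/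
/-!
Write `π₀ = 1 - ∑ πᵢ` and `|x| = ∑ xᵢ`. Since `cᵢ = n πᵢ π₀`, the weight `w(x) cᵢ` is `(n - |x|) πᵢ`.
The p.m.f. satisfies the ratio identity `π₀ (xᵢ + 1) p(x + eᵢ) = πᵢ (n - |x|) p(x)`
(`multPMF_step`), so the shift `x ↦ x + eᵢ` gives the Stein-type identity
`πᵢ E[(n - |X|) g(X + eᵢ)] = π₀ E[Xᵢ g(X)]` (`multE_shift`).
Summing over `i`, the right-hand side becomes
`π₀ E[|X| g] - (1 - π₀) E[(n - |X|) g] = E[|X| g] - n (1 - π₀) E[g]` (`multE_stein`).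
For `g = 1` the left-hand side is `0`, which together with the normalisation `∑ p = 1` identifies
`n (1 - π₀)` as `E|X|`. All the series have finite support.
-/

open scoped BigOperators

/-- Values of `x` off the coordinate `i` are unchanged by the update, so only one factor moves. -/
lemma prod_apply_update {k : ℕ} (F : Fin k → ℕ → ℝ) (x : Fin k → ℕ) (i : Fin k) (a : ℕ) :
    ∏ j, F j (Function.update x i a j) = F i a * ∏ j ∈ Finset.univ.erase i, F j (x j) := by
  rw [← Finset.mul_prod_erase Finset.univ _ (Finset.mem_univ i)]
  simp only [Function.update_self]
  congr 1
  refine Finset.prod_congr rfl fun j hj => ?_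
  rw [Function.update_of_ne (Finset.ne_of_mem_erase hj)]

lemma sum_update_succ {k : ℕ} (x : Fin k → ℕ) (i : Fin k) :
    ∑ j, Function.update x i (x i + 1) j = ∑ j, x j + 1 := by
  rw [Finset.sum_update_of_mem (Finset.mem_univ i),
    ← Finset.add_sum_erase Finset.univ x (Finset.mem_univ i), Finset.sdiff_singleton_eq_erase]
  ring

lemma multPMF_step (k n : ℕ) (π : Fin k → ℝ) (x : Fin k → ℕ) (i : Fin k) :
    (1 - ∑ j, π j) * ((x i : ℝ) + 1) * multPMF k n π (Function.update x i (x i + 1))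
      = π i * ((n : ℝ) - ∑ j, (x j : ℝ)) * multPMF k n π x := by
  unfold multPMF
  rw [sum_update_succ, ← Nat.cast_sum]
  by_cases h : ∑ j, x j + 1 ≤ n
  · obtain ⟨m, rfl⟩ := Nat.exists_eq_add_of_le h
    set s := ∑ j, x j with hs
    rw [if_pos h, if_pos (by omega), show s + 1 + m - (s + 1) = m by omega,
      show s + 1 + m - s = m + 1 by omega,
      prod_apply_update (fun _ a => (Nat.factorial a : ℝ)),
      prod_apply_update (fun j a => π j ^ a),
      ← Finset.mul_prod_erase Finset.univ (fun j => (Nat.factorial (x j) : ℝ)) (Finset.mem_univ i),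
      ← Finset.mul_prod_erase Finset.univ (fun j => π j ^ x j) (Finset.mem_univ i)]
    have hP : ∏ j ∈ Finset.univ.erase i, (Nat.factorial (x j) : ℝ) ≠ 0 :=
      Finset.prod_ne_zero_iff.2 fun j _ => Nat.cast_ne_zero.2 (Nat.factorial_ne_zero _)
    have hx : (Nat.factorial (x i) : ℝ) ≠ 0 := Nat.cast_ne_zero.2 (Nat.factorial_ne_zero _)
    have hm : (Nat.factorial m : ℝ) ≠ 0 := Nat.cast_ne_zero.2 (Nat.factorial_ne_zero _)
    have hx1 : (x i : ℝ) + 1 ≠ 0 := by positivity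
    have hm1 : (m : ℝ) + 1 ≠ 0 := by positivity
    rw [Nat.factorial_succ (x i), Nat.factorial_succ m]
    push_cast
    generalize (Nat.factorial (s + 1 + m) : ℝ) = N
    field_simp
    ring
  · -- Both sides vanish: either `|x| = n`, or `x` is outside the support.
    rw [if_neg h]
    by_cases h' : ∑ j, x j ≤ n
    · have : ∑ j, x j = n := by omega
      simp [this]
    · simp [h']

lemma multPMF_support_finite (k n : ℕ) (π : Fin k → ℝ) :
    (Function.support (multPMF k n π)).Finite := by
  refine (Set.finite_Iic (fun _ : Fin k => n)).subset fun x hx i => ?_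
  by_contra hi
  refine hx (if_neg fun h => hi ?_)
  exact (Finset.single_le_sum (fun j _ => Nat.zero_le (x j)) (Finset.mem_univ i)).trans h

/-- The expectation `E[h(X)]` for `X ∼ M_k(n, π)`, as a series (of finite support). -/
noncomputable def multE (k n : ℕ) (π : Fin k → ℝ) (h : (Fin k → ℕ) → ℝ) : ℝ :=
  ∑' x, multPMF k n π x * h x

lemma multE_summable (k n : ℕ) (π : Fin k → ℝ) (h : (Fin k → ℕ) → ℝ) :
    Summable fun x => multPMF k n π x * h x :=
  summable_of_hasFiniteSupport
    ((multPMF_support_finite k n π).subset (Function.support_mul_subset_left _ _))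

lemma multE_sub (k n : ℕ) (π : Fin k → ℝ) (h h' : (Fin k → ℕ) → ℝ) :
    multE k n π (fun x => h x - h' x) = multE k n π h - multE k n π h' := by
  unfold multE
  rw [← (multE_summable k n π h).tsum_sub (multE_summable k n π h')]
  simp only [mul_sub]

lemma multE_const_mul (k n : ℕ) (π : Fin k → ℝ) (c : ℝ) (h : (Fin k → ℕ) → ℝ) :
    multE k n π (fun x => c * h x) = c * multE k n π h := by
  unfold multE
  rw [← tsum_mul_left]
  exact tsum_congr fun x => by ring

lemma multE_sum (k n : ℕ) (π : Fin k → ℝ) (h : Fin k → (Fin k → ℕ) → ℝ) :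
    multE k n π (fun x => ∑ i, h i x) = ∑ i, multE k n π (h i) := by
  unfold multE
  rw [← Summable.tsum_finsetSum fun i _ => multE_summable k n π (h i)]
  simp only [Finset.mul_sum]

/-- The total mass is `1`: on each level set `|x| = s` the multinomial theorem gives the
binomial weight `C(n, s) (∑ πᵢ)^s π₀^(n-s)`. -/
lemma multE_one (k n : ℕ) (π : Fin k → ℝ) : multE k n π (fun _ => 1) = 1 := by
  have hdisj : Set.PairwiseDisjoint (Finset.range (n + 1) : Set ℕ)
      (fun s => Finset.piAntidiag (Finset.univ : Finset (Fin k)) s) := by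
    intro a _ b _ hab
    refine Finset.disjoint_left.2 fun x hx hx' => hab ?_
    rw [Finset.mem_piAntidiag] at hx hx'
    exact hx.1.symm.trans hx'.1
  unfold multE
  rw [tsum_eq_sum (s := (Finset.range (n + 1)).biUnion
    fun s => Finset.piAntidiag (Finset.univ : Finset (Fin k)) s), Finset.sum_biUnion hdisj]
  · have key : ∀ s ∈ Finset.range (n + 1),
        ∑ x ∈ Finset.piAntidiag (Finset.univ : Finset (Fin k)) s, multPMF k n π x * 1
          = (∑ i, π i) ^ s * (1 - ∑ i, π i) ^ (n - s) * (n.choose s : ℝ) := by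
      intro s hs
      have hsn : s ≤ n := Nat.lt_succ_iff.1 (Finset.mem_range.1 hs)
      rw [Finset.sum_pow_eq_sum_piAntidiag, Finset.sum_mul, Finset.sum_mul]
      refine Finset.sum_congr rfl fun x hx => ?_
      have hxs : ∑ i, x i = s := (Finset.mem_piAntidiag.1 hx).1
      have hmul := Nat.multinomial_spec (Finset.univ : Finset (Fin k)) x
      rw [hxs] at hmul
      have hch := Nat.choose_mul_factorial_mul_factorial hsn
      have hP : ∏ j, (Nat.factorial (x j) : ℝ) ≠ 0 :=
        Finset.prod_ne_zero_iff.2 fun j _ => Nat.cast_ne_zero.2 (Nat.factorial_ne_zero _)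
      have hm : (Nat.factorial (n - s) : ℝ) ≠ 0 := Nat.cast_ne_zero.2 (Nat.factorial_ne_zero _)
      unfold multPMF
      rw [hxs, if_pos hsn, ← hch, ← hmul]
      push_cast
      field_simp
    rw [Finset.sum_congr rfl key, ← add_pow]
    simp
  · intro x hx
    have : ¬ ∑ i, x i ≤ n := by
      intro h
      refine hx (Finset.mem_biUnion.2 ⟨∑ i, x i, Finset.mem_range.2 (by omega), ?_⟩)
      simp [Finset.mem_piAntidiag]
    simp [multPMF, this]

lemma multE_shift (k n : ℕ) (π : Fin k → ℝ) (g : (Fin k → ℕ) → ℝ) (i : Fin k) :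
    multE k n π (fun x => π i * (((n : ℝ) - ∑ j, (x j : ℝ)) *
        g (Function.update x i (x i + 1))))
      = multE k n π (fun x => (1 - ∑ j, π j) * ((x i : ℝ) * g x)) := by
  have hinj : Function.Injective fun x : Fin k → ℕ => Function.update x i (x i + 1) := by
    intro x y hxy
    funext j
    have hj := congrFun hxy j
    by_cases h : j = i
    · subst h
      simpa using hj
    · simpa [h] using hj
  unfold multE
  -- Points outside the range of the shift have `x i = 0`, where the summand vanishes.
  rw [← hinj.tsum_eq (f := fun x => multPMF k n π x * ((1 - ∑ j, π j) * ((x i : ℝ) * g x)))]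
  · refine tsum_congr fun x => ?_
    have := multPMF_step k n π x i
    simp only [Function.update_self]
    push_cast
    linear_combination -g (Function.update x i (x i + 1)) * this
  · intro x hx
    have hxi : x i ≠ 0 := by
      intro h
      simp [h] at hx
    refine ⟨Function.update x i (x i - 1), ?_⟩
    simp [Nat.sub_add_cancel (Nat.one_le_iff_ne_zero.2 hxi)]

lemma multE_stein (k n : ℕ) (π : Fin k → ℝ) (g : (Fin k → ℕ) → ℝ) :
    multE k n π (fun x => ∑ i, π i * (((n : ℝ) - ∑ j, (x j : ℝ)) * fd g i x))
      = multE k n π (fun x => (∑ i, (x i : ℝ)) * g x)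
        - n * (∑ i, π i) * multE k n π g := by
  have h1 : ∀ i, multE k n π (fun x => π i * (((n : ℝ) - ∑ j, (x j : ℝ)) * fd g i x))
      = (1 - ∑ j, π j) * multE k n π (fun x => (x i : ℝ) * g x)
        - π i * (n * multE k n π g - multE k n π (fun x => (∑ j, (x j : ℝ)) * g x)) := by
    intro i
    rw [← multE_const_mul, ← multE_shift, ← multE_const_mul k n π n, ← multE_sub,
      ← multE_const_mul, ← multE_sub]
    congr 1
    funext x
    unfold fd
    ring
  have h2 : multE k n π (fun x => (∑ j, (x j : ℝ)) * g x)
      = ∑ i, multE k n π (fun x => (x i : ℝ) * g x) := by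
    rw [← multE_sum]
    simp only [Finset.sum_mul]
  rw [multE_sum, Finset.sum_congr rfl fun i _ => h1 i, Finset.sum_sub_distrib, ← Finset.mul_sum,
    ← Finset.sum_mul, ← h2]
  ring

lemma multSigma_row_sum (k n : ℕ) (π : Fin k → ℝ) (i : Fin k) :
    ∑ j, multSigma k n π i j = n * π i * (1 - ∑ j, π j) := by
  have h : ∀ j, multSigma k n π i j = (if i = j then n * π i else 0) - n * π i * π j := by
    intro j
    unfold multSigma
    split_ifs with hij
    · subst hij
      ring
    · ring
  simp only [h, Finset.sum_sub_distrib, ← Finset.mul_sum, Finset.sum_ite_eq, Finset.mem_univ,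
    if_true]
  ring

/-- Covariance identity for the multinomial distribution:
`Cov(Σᵢ Xᵢ, g(X)) = E[w(X) Σᵢ cᵢ Δᵢ g(X)]` where `cᵢ = Σⱼ σᵢⱼ`. -/
theorem multinomial_covariance_identity
    (k n : ℕ) (hk : 1 ≤ k) (π : Fin k → ℝ)
    (hπ : ∀ i, 0 < π i ∧ π i < 1) (hπ0 : 0 < 1 - ∑ i, π i)
    (g : (Fin k → ℕ) → ℝ) :
    (∑' x : Fin k → ℕ, multPMF k n π x * ((∑ i, (x i : ℝ)) * g x))
      - (∑' x : Fin k → ℕ, multPMF k n π x * ∑ i, (x i : ℝ))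
        * (∑' x : Fin k → ℕ, multPMF k n π x * g x)
    = ∑' x : Fin k → ℕ,
        multPMF k n π x *
          (multW k n π x * ∑ i, (∑ j, multSigma k n π i j) * fd g i x) := by
  have hmean : multE k n π (fun x => ∑ i, (x i : ℝ)) = n * ∑ i, π i := by
    have h := multE_stein k n π (fun _ => 1)
    rw [multE_one] at h
    have h0 : multE k n π (fun x => ∑ i, π i * (((n : ℝ) - ∑ j, (x j : ℝ)) *
        fd (fun _ => 1) i x)) = 0 := by
      simp [multE, fd]
    rw [h0] at h
    simp only [mul_one] at h
    linarith
  have hR : ∑' x : Fin k → ℕ, multPMF k n π x *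
        (multW k n π x * ∑ i, (∑ j, multSigma k n π i j) * fd g i x)
      = multE k n π (fun x => ∑ i, π i * (((n : ℝ) - ∑ j, (x j : ℝ)) * fd g i x)) := by
    refine tsum_congr fun x => ?_
    rcases Nat.eq_zero_or_pos n with rfl | hn
    · -- For `n = 0` the law is the point mass at `0`, where `n - |x| = 0`.
      by_cases hx : ∑ i, x i ≤ 0
      · have hx0 : ∑ j, (x j : ℝ) = 0 := by
          rw [← Nat.cast_sum, Nat.le_zero.1 hx, Nat.cast_zero]
        simp [multW, hx0]
      · simp [multPMF, hx]
    · congr 1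
      rw [Finset.mul_sum]
      refine Finset.sum_congr rfl fun i _ => ?_
      have hn' : (n : ℝ) ≠ 0 := Nat.cast_ne_zero.2 hn.ne'
      have hπ0' := hπ0.ne'
      rw [multSigma_row_sum, multW, if_neg hn.ne']
      field_simp
  rw [hR, multE_stein, ← hmean]
  rfl
end
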